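/- In the nonlinear setting with standing conditions (N1)–(N5): for every ε > 0 there exists n_0 ∈ ℕ such that for every n > n_0 and every closed interval Δ ⊂ [0,1] of positive length, one has m_n(Δ)/|Δ|^{h_n} ≤ 1 + ε. -/

import Mathlib

open Set Filter MeasureTheory Topology

noncomputable section

/-- Composition `g_{i₁} ∘ g_{i₂} ∘ ⋯ ∘ g_{i_l}` along a finite word. -/
def wordComp (g : ℕ → ℝ → ℝ) : List ℕ → ℝ → ℝ
  | [] => id
  | k :: w => g k ∘ wordComp g w

/-- The limit set `J_n` of the IFS `S_n = {g_1, …, g_n}`. -/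
def limitSet (g : ℕ → ℝ → ℝ) (n : ℕ) : Set ℝ :=
  ⋂ l : ℕ, ⋃ w ∈ {w : List ℕ | w.length = l + 1 ∧ ∀ i ∈ w, 1 ≤ i ∧ i ≤ n},
    wordComp g w '' Set.Icc (0 : ℝ) 1

/-- The distortion `κ(g) = sup_{x,y ∈ [0,1]} |g′(y)|/|g′(x)|` of a map with derivative `f'`. -/
def distortion (f' : ℝ → ℝ) : ℝ :=
  ⨆ x ∈ Set.Icc (0 : ℝ) 1, ⨆ y ∈ Set.Icc (0 : ℝ) 1, |f' y| / |f' x|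

/-- The nonlinear setting of the paper: a strictly decreasing sequence `b_k → 0` with `b_0 = 1`,
    decreasing `C²` diffeomorphisms `g_k : [0,1] → [b_k, b_{k-1}]` (with first and second
    derivatives `g'` and `g''`), the Hausdorff dimensions `h_n` of the limit sets `J_n`, and
    the standing conditions (N1)–(N5). -/
structure NonlinearIFS where
  b : ℕ → ℝ
  g : ℕ → ℝ → ℝ
  g' : ℕ → ℝ → ℝ
  g'' : ℕ → ℝ → ℝ
  h : ℕ → ℝ
  b_zero : b 0 = 1
  b_anti : StrictAnti b
  b_lim : Filter.Tendsto b Filter.atTop (nhds 0)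
  g_image : ∀ k, 1 ≤ k → g k '' Set.Icc (0 : ℝ) 1 = Set.Icc (b k) (b (k - 1))
  g_anti : ∀ k, 1 ≤ k → StrictAntiOn (g k) (Set.Icc (0 : ℝ) 1)
  g_zero : ∀ k, 1 ≤ k → g k 0 = b (k - 1)
  g_one : ∀ k, 1 ≤ k → g k 1 = b k
  deriv1 : ∀ k, 1 ≤ k → ∀ x ∈ Set.Icc (0 : ℝ) 1, HasDerivAt (g k) (g' k x) x
  deriv2 : ∀ k, 1 ≤ k → ∀ x ∈ Set.Icc (0 : ℝ) 1, HasDerivAt (g' k) (g'' k x) x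
  deriv_ne : ∀ k, 1 ≤ k → ∀ x ∈ Set.Icc (0 : ℝ) 1, g' k x ≠ 0
  h_dim : ∀ n, 1 ≤ n → dimH (limitSet g n) = ENNReal.ofReal (h n)
  N1 : Filter.Tendsto (fun n : ℕ => (1 - h n) * Real.log n) Filter.atTop (nhds 0)
  N2 : Filter.Tendsto (fun n : ℕ => ⨆ k ∈ Set.Ici n, b k / b (k + 1)) Filter.atTop (nhds 1)
  N3 : ∃ c : ℝ, 0 < c ∧ ∀ n, 1 ≤ n → ∀ x ∈ Set.Icc (0 : ℝ) 1, |g'' n x / g' n x| < c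
  N4 : Filter.Tendsto (fun n : ℕ => distortion (g' n)) Filter.atTop (nhds 1)
  N5 : ∃ α : ℝ, α < 1 ∧ ∀ n, 1 ≤ n → ∀ x ∈ Set.Icc (0 : ℝ) 1, |g' n x| < α

/-- The normalized Hausdorff measure `m_n(A) = H_{h_n}(A ∩ J_n)/H_{h_n}(J_n)`. -/
def normMeas (S : NonlinearIFS) (n : ℕ) (A : Set ℝ) : ENNReal :=
  μH[S.h n] (A ∩ limitSet S.g n) / μH[S.h n] (limitSet S.g n)

/-!
The argument applies to every probability measure whose mass grows under each branch `g_k` by at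
most the factor `sup |g_k'| ^ h_n`, as the normalized Hausdorff measure does. Iterating the transfer
operator `φ ↦ ∑ |g_k'| ^ h_n φ ∘ g_k` on the cone of functions with Lipschitz logarithm, where it
regains a fixed fraction of the Lebesgue mean at each step, shows that such a measure integrates the
cone at most `q` times as much as Lebesgue measure once `n ^ (1 - h_n)` is close to `1`, which is
(N1). Testing on `exp (-a * dist (x, Δ))` gives the density bound for intervals `Δ` that are not
short.

An interval `[0, t]` is compared with the union of the cylinders it meets, using (N2), and these
have almost the density of `[0, 1]` by (N4); a short interval `[s, 1]` is the image under `g_1` of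
an interval at `0`. An interval contained in no cylinder consists of cylinders and two extreme
pieces which are images of such boundary intervals. Any other interval is pulled back along branches
until it is long or of this kind. By (N3) and (N5) the logarithms of the distortions met on the way
form a geometric series with sum proportional to the length of the last pullback; if that is long,
it is first cut into boundedly many short pieces, which costs a factor `N ^ (1 - h_n)`.
-/

section Real

theorem exists_one_lt_pow_le {q : ℝ} (hq : 1 < q) (k : ℕ) : ∃ r, 1 < r ∧ r ^ k ≤ q := by
  have hcont : Tendsto (fun r : ℝ ↦ r ^ k) (𝓝[>] 1) (𝓝 1) := by
    simpa using ((continuous_pow k).tendsto (1 : ℝ)).mono_left nhdsWithin_le_nhds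
  obtain ⟨r, hrq, hr⟩ :=
    ((hcont.eventually (eventually_le_nhds hq)).and self_mem_nhdsWithin).exists
  exact ⟨r, hr, hrq⟩

theorem le_biSup_of_forall_le {ι : Type*} {f : ι → ℝ} {s : Set ι} {C : ℝ}
    (hf : ∀ i ∈ s, f i ≤ C) {i : ι} (hi : i ∈ s) : f i ≤ ⨆ j ∈ s, f j := by
  refine le_ciSup₂ (f := fun i (_ : i ∈ s) ↦ f i) ⟨C, ?_⟩ i hi
  rintro _ ⟨_, ⟨j, rfl⟩, ⟨hj, rfl⟩⟩
  exact hf j hj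

-- A real supremum that is not bounded above has the junk value `0`.
theorem le_biSup_of_biSup_pos {ι : Type*} {f : ι → ℝ} {s : Set ι} (hpos : 0 < ⨆ j ∈ s, f j)
    {i : ι} (hi : i ∈ s) : f i ≤ ⨆ j ∈ s, f j := by
  have hbdd : BddAbove (range fun j ↦ ⨆ _ : j ∈ s, f j) := by
    by_contra hunbdd
    exact hpos.ne' (Real.iSup_of_not_bddAbove hunbdd)
  simpa [hi] using le_ciSup hbdd i

theorem exp_mul_sub_one_le {a d : ℝ} (ha : 0 ≤ a) (hd0 : 0 ≤ d) (hd1 : d ≤ 1) :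
    Real.exp (a * d) - 1 ≤ d * (a * Real.exp a) := by
  have htangent : Real.exp (a * d) * (1 - a * d) ≤ 1 := by
    calc Real.exp (a * d) * (1 - a * d) ≤ Real.exp (a * d) * Real.exp (-(a * d)) := by
          gcongr
          exact Real.one_sub_le_exp_neg _
      _ = 1 := by rw [← Real.exp_add, add_neg_cancel, Real.exp_zero]
  have hmono : a * d * Real.exp (a * d) ≤ a * d * Real.exp a := by
    gcongr
    exact mul_le_of_le_one_right ha hd1
  linarith

theorem sub_mul_le_exp_mul_sub_exp_mul {a a' d : ℝ} (ha' : 0 ≤ a') (haa' : a' ≤ a)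
    (hd : 0 ≤ d) : (a - a') * d ≤ Real.exp (a * d) - Real.exp (a' * d) := by
  have hsplit : Real.exp (a * d) = Real.exp (a' * d) * Real.exp ((a - a') * d) := by
    rw [← Real.exp_add, ← add_mul, add_sub_cancel]
  have hone : 1 ≤ Real.exp (a' * d) := Real.one_le_exp (by positivity)
  nlinarith [Real.add_one_le_exp ((a - a') * d), mul_nonneg (sub_nonneg.2 haa') hd]

theorem rpow_le_card_rpow_mul_add {h : ℝ} (h0 : 0 ≤ h) (h1 : h ≤ 1) {x : ℝ} (hx : 0 ≤ x)
    {N : ℝ} (hN : 0 < N) : x ^ h ≤ N ^ (1 - h) * (h * x + (1 - h) / N) := by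
  have amgm := Real.geom_mean_le_arith_mean2_weighted h0 (sub_nonneg.2 h1) hx
    (inv_nonneg.2 hN.le) (by ring)
  calc x ^ h = N ^ (1 - h) * (x ^ h * N⁻¹ ^ (1 - h)) := by
        rw [Real.inv_rpow hN.le]
        field_simp
    _ ≤ N ^ (1 - h) * (h * x + (1 - h) / N) := by
        rw [div_eq_mul_inv]
        gcongr

theorem sum_rpow_le_card_rpow_mul_rpow_sum {ι : Type*} {s : Finset ι} (hs : s.Nonempty) {h : ℝ}
    (h0 : 0 ≤ h) (h1 : h ≤ 1) {l : ι → ℝ} (hl : ∀ i ∈ s, 0 ≤ l i) :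
    ∑ i ∈ s, l i ^ h ≤ (s.card : ℝ) ^ (1 - h) * (∑ i ∈ s, l i) ^ h := by
  have hN : (0 : ℝ) < s.card := by exact_mod_cast hs.card_pos
  have jensen := (Real.concaveOn_rpow h0 h1).le_map_sum (t := s) (w := fun _ ↦ (s.card : ℝ)⁻¹)
    (fun _ _ ↦ by positivity) (by simp [hN.ne']) hl
  simp only [smul_eq_mul, ← Finset.mul_sum] at jensen
  rw [inv_mul_le_iff₀ hN, Real.mul_rpow (by positivity) (Finset.sum_nonneg hl),
    Real.inv_rpow hN.le] at jensen
  rw [Real.rpow_sub hN, Real.rpow_one, div_mul_eq_mul_div, mul_div_assoc, div_eq_inv_mul]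
  exact jensen

/-- Bisecting `N` times replaces the constant `C` by `C / 2 ^ N`. -/
theorem le_of_le_exp_mul_of_add_le {F G : ℝ → ℝ → ℝ} {a b C : ℝ} (hab : a ≤ b)
    (hF : ∀ ⦃u w v⦄, a ≤ u → u ≤ w → w ≤ v → v ≤ b → F u v ≤ F u w + F w v)
    (hG : ∀ ⦃u w v⦄, a ≤ u → u ≤ w → w ≤ v → v ≤ b → G u w + G w v ≤ G u v)
    (hFG : ∀ ⦃u v⦄, a ≤ u → u ≤ v → v ≤ b → F u v ≤ Real.exp (C * (v - u)) * G u v) :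
    F a b ≤ G a b := by
  have bisected (N : ℕ) : ∀ ⦃u v⦄, a ≤ u → u ≤ v → v ≤ b →
      F u v ≤ Real.exp (C * (v - u) / 2 ^ N) * G u v := by
    induction N with
    | zero => simpa using hFG
    | succ N ih =>
      intro u v hau huv hvb
      have hleft := ih hau (show u ≤ (u + v) / 2 by linarith) (by linarith)
      have hright := ih (show a ≤ (u + v) / 2 by linarith) (by linarith) hvb
      have hdiv₁ : C * ((u + v) / 2 - u) / 2 ^ N = C * (v - u) / 2 ^ (N + 1) := by ring
      have hdiv₂ : C * (v - (u + v) / 2) / 2 ^ N = C * (v - u) / 2 ^ (N + 1) := by ring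
      rw [hdiv₁] at hleft
      rw [hdiv₂] at hright
      have hmid : u ≤ (u + v) / 2 ∧ (u + v) / 2 ≤ v := by constructor <;> linarith
      calc F u v ≤ F u ((u + v) / 2) + F ((u + v) / 2) v := hF hau hmid.1 hmid.2 hvb
        _ ≤ Real.exp (C * (v - u) / 2 ^ (N + 1)) * (G u ((u + v) / 2) + G ((u + v) / 2) v) := by
          rw [mul_add]
          exact add_le_add hleft hright
        _ ≤ _ := by gcongr; exact hG hau hmid.1 hmid.2 hvb
  have hlim : Tendsto (fun N : ℕ ↦ Real.exp (C * (b - a) / 2 ^ N) * G a b) atTop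
      (𝓝 (G a b)) := by
    have hexp : Tendsto (fun N : ℕ ↦ C * (b - a) / 2 ^ N) atTop (𝓝 0) :=
      tendsto_const_nhds.div_atTop (tendsto_pow_atTop_atTop_of_one_lt one_lt_two)
    simpa using ((Real.continuous_exp.tendsto 0).comp hexp).mul_const (G a b)
  exact ge_of_tendsto' hlim fun N ↦ bisected N le_rfl hab le_rfl

theorem Icc_subset_biUnion_Icc {α : Type*} [LinearOrder α] (p : ℕ → α) {N : ℕ} (hN : 0 < N) :
    Icc (p N) (p 0) ⊆ ⋃ i ∈ Finset.range N, Icc (p (i + 1)) (p i) := by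
  induction N, hN using Nat.le_induction with
  | base => simp
  | succ N _ ih =>
    rw [Finset.range_add_one, Finset.set_biUnion_insert]
    intro x hx
    rcases le_total x (p N) with hxN | hxN
    · exact Or.inl ⟨hx.1, hxN⟩
    · exact Or.inr (ih ⟨hxN, hx.2⟩)

theorem measureReal_Icc_le_of_pieces {m : Measure ℝ} [IsFiniteMeasure m] {p : ℕ → ℝ} {N : ℕ}
    (hN : 0 < N) {h B : ℝ} (h0 : 0 ≤ h) (h1 : h ≤ 1) (hB : 0 ≤ B)
    (hp : ∀ i < N, p (i + 1) ≤ p i)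
    (hm : ∀ i < N, m.real (Icc (p (i + 1)) (p i)) ≤ B * (p i - p (i + 1)) ^ h) :
    m.real (Icc (p N) (p 0)) ≤ B * (N : ℝ) ^ (1 - h) * (p 0 - p N) ^ h := by
  calc m.real (Icc (p N) (p 0))
      ≤ ∑ i ∈ Finset.range N, m.real (Icc (p (i + 1)) (p i)) :=
        (measureReal_mono (Icc_subset_biUnion_Icc p hN) (measure_ne_top _ _)).trans
          (measureReal_biUnion_finset_le _ _)
    _ ≤ ∑ i ∈ Finset.range N, B * (p i - p (i + 1)) ^ h :=
        Finset.sum_le_sum fun i hi ↦ hm i (Finset.mem_range.1 hi)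
    _ ≤ B * ((N : ℝ) ^ (1 - h) * (∑ i ∈ Finset.range N, (p i - p (i + 1))) ^ h) := by
        rw [← Finset.mul_sum]
        gcongr
        simpa using sum_rpow_le_card_rpow_mul_rpow_sum (Finset.nonempty_range_iff.2 hN.ne') h0 h1
          fun i hi ↦ sub_nonneg.2 (hp i (Finset.mem_range.1 hi))
    _ = B * (N : ℝ) ^ (1 - h) * (p 0 - p N) ^ h := by rw [Finset.sum_range_sub', mul_assoc]

/-- The least admissible `M` is a fixed subsolution of `M ↦ R * (γ + (1 - γ) * M)`, a contraction
because `R * (1 - γ) < 1`. -/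
theorem forall_le_mul_of_forall_le_affine_mul {ι : Type*} {s : Set ι} {F G : ι → ℝ}
    {M₀ q R γ : ℝ} (hG : ∀ i ∈ s, 0 ≤ G i) (hF : ∀ i ∈ s, F i ≤ M₀ * G i) (hM₀ : 0 ≤ M₀)
    (hstep : ∀ M, 0 ≤ M → (∀ i ∈ s, F i ≤ M * G i) →
      ∀ i ∈ s, F i ≤ R * (γ + (1 - γ) * M) * G i)
    (hR : 0 < R) (hγ0 : 0 < γ) (hγ1 : γ ≤ 1) (hq : 0 < q) (hRq : R * (γ + (1 - γ) * q) ≤ q) :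
    ∀ i ∈ s, F i ≤ q * G i := by
  let W : Set ℝ := {M | 0 ≤ M ∧ ∀ i ∈ s, F i ≤ M * G i}
  have hW_closed : IsClosed W := by
    simp only [W, ofPred_and, ofPred_forall]
    exact isClosed_Ici.inter (isClosed_iInter fun i ↦ isClosed_iInter fun _ ↦
      isClosed_le continuous_const (by fun_prop))
  have hW_bdd : BddBelow W := ⟨0, fun M hM ↦ hM.1⟩
  obtain ⟨hM0, hM⟩ : sInf W ∈ W := hW_closed.csInf_mem ⟨M₀, hM₀, hF⟩ hW_bdd
  have hnext : sInf W ≤ R * (γ + (1 - γ) * sInf W) := csInf_le hW_bdd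
    ⟨mul_nonneg hR.le (add_nonneg hγ0.le (mul_nonneg (sub_nonneg.2 hγ1) hM0)), hstep _ hM0 hM⟩
  have hcontr : R * (1 - γ) < 1 := by
    refine lt_of_mul_lt_mul_right ?_ hq.le
    linarith [mul_pos hR hγ0]
  have hle : sInf W ≤ q := by nlinarith
  exact fun i hi ↦ (hM i hi).trans (mul_le_mul_of_nonneg_right hle (hG i hi))

end Real

/-- The intervals `[s, t] ⊆ [0, 1]` of positive length with property `Q` have `h`-dimensional
density at most `q` with respect to `m`. -/
def DensityLE (m : Measure ℝ) (h q : ℝ) (Q : ℝ → ℝ → Prop) : Prop :=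
  ∀ s t, 0 ≤ s → s < t → t ≤ 1 → Q s t → m.real (Icc s t) ≤ q * (t - s) ^ h

/-- `[s, t]` is the union of at most `N₀` adjacent intervals with property `P`. The breakpoints are
listed in decreasing order. -/
def HasSubdivision (P : ℝ → ℝ → Prop) (N₀ : ℕ) (s t : ℝ) : Prop :=
  ∃ (N : ℕ) (p : ℕ → ℝ), 0 < N ∧ N ≤ N₀ ∧ p 0 = t ∧ p N = s ∧ ∀ i < N, P (p (i + 1)) (p i)

namespace HasSubdivision

variable {P P' : ℝ → ℝ → Prop} {N₀ : ℕ} {s t : ℝ}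

theorem single (hN₀ : 0 < N₀) (h : P s t) : HasSubdivision P N₀ s t :=
  ⟨1, fun i ↦ if i = 0 then t else s, one_pos, hN₀, rfl, rfl, fun i hi ↦ by
    simpa [Nat.lt_one_iff.1 hi] using h⟩

theorem equal (hN₀ : 0 < N₀)
    (h : ∀ u v, s ≤ u → v ≤ t → v - u = (t - s) / N₀ → P u v) (hst : s ≤ t) :
    HasSubdivision P N₀ s t := by
  have hN₀' : (0 : ℝ) < N₀ := Nat.cast_pos.2 hN₀
  have := sub_nonneg.2 hst
  have hlast : t - N₀ * ((t - s) / N₀) = s := by rw [mul_div_cancel₀ _ hN₀'.ne', sub_sub_cancel]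
  refine ⟨N₀, fun i ↦ t - i * ((t - s) / N₀), hN₀, le_rfl, by simp, hlast,
    fun i hi ↦ h _ _ ?_ ?_ ?_⟩
  · have hi' : ((i + 1 : ℕ) : ℝ) ≤ N₀ := Nat.cast_le.2 hi
    calc s = t - N₀ * ((t - s) / N₀) := hlast.symm
      _ ≤ t - ((i + 1 : ℕ) : ℝ) * ((t - s) / N₀) := by gcongr
  · exact sub_le_self _ (by positivity)
  · push_cast
    ring

theorem image {f : ℝ → ℝ} (hP : ∀ u v, P u v → P' (f v) (f u)) (h : HasSubdivision P N₀ s t) :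
    HasSubdivision P' N₀ (f t) (f s) := by
  obtain ⟨N, p, hN, hNN₀, rfl, rfl, hp⟩ := h
  refine ⟨N, fun i ↦ f (p (N - i)), hN, hNN₀, by simp, by simp, fun i hi ↦ hP _ _ ?_⟩
  have := hp (N - (i + 1)) (by lia)
  rwa [show N - (i + 1) + 1 = N - i by lia] at this

theorem measureReal_Icc_le {m : Measure ℝ} [IsFiniteMeasure m] {h B : ℝ} (h0 : 0 ≤ h) (h1 : h ≤ 1)
    (hB : 0 ≤ B) (hP : ∀ u v, P u v → u ≤ v ∧ m.real (Icc u v) ≤ B * (v - u) ^ h)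
    (hst : s ≤ t) (hsub : HasSubdivision P N₀ s t) :
    m.real (Icc s t) ≤ B * (N₀ : ℝ) ^ (1 - h) * (t - s) ^ h := by
  obtain ⟨N, p, hN, hNN₀, rfl, rfl, hp⟩ := hsub
  refine (measureReal_Icc_le_of_pieces hN h0 h1 hB (fun i hi ↦ (hP _ _ (hp i hi)).1)
    fun i hi ↦ (hP _ _ (hp i hi)).2).trans ?_
  have := sub_nonneg.2 hst
  gcongr

end HasSubdivision

/-- A nonnegative function whose logarithm is `a`-Lipschitz on `s`; the inequality is stated in
multiplicative form so that `φ` may vanish (identically). These functions form the cone that is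
invariant under the transfer operator. -/
structure LogLipschitzOn {X : Type*} [PseudoMetricSpace X] (a : ℝ) (φ : X → ℝ) (s : Set X) :
    Prop where
  nonneg : ∀ x ∈ s, 0 ≤ φ x
  le_exp_mul : ∀ x ∈ s, ∀ y ∈ s, φ x ≤ Real.exp (a * dist x y) * φ y

namespace LogLipschitzOn

section PseudoMetricSpace

variable {X : Type*} [PseudoMetricSpace X] {a a' : ℝ} {φ ψ : X → ℝ} {s : Set X}

theorem le_exp_mul_of_dist_le (hφ : LogLipschitzOn a φ s) (ha : 0 ≤ a) {x y : X} (hx : x ∈ s)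
    (hy : y ∈ s) {d : ℝ} (hd : dist x y ≤ d) : φ x ≤ Real.exp (a * d) * φ y :=
  (hφ.le_exp_mul x hx y hy).trans <| by
    have := hφ.nonneg y hy
    gcongr

theorem mono (hφ : LogLipschitzOn a φ s) (haa' : a ≤ a') : LogLipschitzOn a' φ s where
  nonneg := hφ.nonneg
  le_exp_mul x hx y hy := (hφ.le_exp_mul x hx y hy).trans <| by
    have := hφ.nonneg y hy
    gcongr

theorem mul (hφ : LogLipschitzOn a φ s) (hψ : LogLipschitzOn a' ψ s) :
    LogLipschitzOn (a + a') (fun x ↦ φ x * ψ x) s where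
  nonneg x hx := mul_nonneg (hφ.nonneg x hx) (hψ.nonneg x hx)
  le_exp_mul x hx y hy := by
    rw [add_mul, Real.exp_add, mul_mul_mul_comm]
    exact mul_le_mul (hφ.le_exp_mul x hx y hy) (hψ.le_exp_mul x hx y hy) (hψ.nonneg x hx)
      (mul_nonneg (Real.exp_nonneg _) (hφ.nonneg y hy))

theorem rpow (hφ : LogLipschitzOn a φ s) {h : ℝ} (h0 : 0 ≤ h) :
    LogLipschitzOn (h * a) (fun x ↦ φ x ^ h) s where
  nonneg x hx := Real.rpow_nonneg (hφ.nonneg x hx) h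
  le_exp_mul x hx y hy := by
    calc φ x ^ h ≤ (Real.exp (a * dist x y) * φ y) ^ h :=
          Real.rpow_le_rpow (hφ.nonneg x hx) (hφ.le_exp_mul x hx y hy) h0
      _ = Real.exp (h * a * dist x y) * φ y ^ h := by
          rw [Real.mul_rpow (Real.exp_nonneg _) (hφ.nonneg y hy), ← Real.exp_mul]
          ring_nf

theorem sum {ι : Type*} {t : Finset ι} {φ : ι → X → ℝ}
    (hφ : ∀ i ∈ t, LogLipschitzOn a (φ i) s) :
    LogLipschitzOn a (fun x ↦ ∑ i ∈ t, φ i x) s where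
  nonneg x hx := Finset.sum_nonneg fun i hi ↦ (hφ i hi).nonneg x hx
  le_exp_mul x hx y hy := by
    rw [Finset.mul_sum]
    exact Finset.sum_le_sum fun i hi ↦ (hφ i hi).le_exp_mul x hx y hy

theorem comp {Y : Type*} [PseudoMetricSpace Y] {f : Y → X} {t : Set Y} {K : ℝ}
    (hφ : LogLipschitzOn a φ s) (ha : 0 ≤ a) (hmaps : MapsTo f t s)
    (hf : ∀ x ∈ t, ∀ y ∈ t, dist (f x) (f y) ≤ K * dist x y) :
    LogLipschitzOn (a * K) (fun x ↦ φ (f x)) t where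
  nonneg x hx := hφ.nonneg _ (hmaps hx)
  le_exp_mul x hx y hy := by
    rw [mul_assoc]
    exact hφ.le_exp_mul_of_dist_le ha (hmaps hx) (hmaps hy) (hf x hx y hy)

theorem exp_neg_mul {d : X → ℝ} (hd : LipschitzWith 1 d) (ha : 0 ≤ a) :
    LogLipschitzOn a (fun x ↦ Real.exp (-(a * d x))) s where
  nonneg _ _ := Real.exp_nonneg _
  le_exp_mul x _ y _ := by
    rw [← Real.exp_add, Real.exp_le_exp]
    have hdist : d y - d x ≤ dist x y := by
      simpa [Real.dist_eq, dist_comm] using (le_abs_self _).trans (hd.dist_le_mul y x)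
    nlinarith

theorem continuousOn (hφ : LogLipschitzOn a φ s) : ContinuousOn φ s := by
  intro y hy
  have hexp (a : ℝ) : Tendsto (fun x ↦ Real.exp (a * dist x y) * φ y) (𝓝[s] y) (𝓝 (φ y)) := by
    have : Continuous fun x ↦ Real.exp (a * dist x y) * φ y := by fun_prop
    simpa using (this.tendsto y).mono_left nhdsWithin_le_nhds
  refine tendsto_of_tendsto_of_tendsto_of_le_of_le' (hexp (-a)) (hexp a) ?_ ?_
  · filter_upwards [self_mem_nhdsWithin] with x hx
    rw [neg_mul, Real.exp_neg, inv_mul_le_iff₀ (Real.exp_pos _), dist_comm]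
    exact hφ.le_exp_mul y hy x hx
  · filter_upwards [self_mem_nhdsWithin] with x hx
    exact hφ.le_exp_mul x hx y hy

/-- With `d = dist x y ≤ 1`, the loss `C (exp (a d) - 1) ≤ C a d exp a` is paid for by the gap
`(exp (a d) - exp (a' d)) φ y ≥ (a - a') d φ y`. -/
theorem sub_const (hφ : LogLipschitzOn a' φ s) (ha' : 0 ≤ a') (haa' : a' < a) {C : ℝ}
    (hC : 0 ≤ C) (hs : ∀ x ∈ s, ∀ y ∈ s, dist x y ≤ 1)
    (hgap : ∀ y ∈ s, C * (a * Real.exp a) ≤ (a - a') * φ y) :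
    LogLipschitzOn a (fun x ↦ φ x - C) s where
  nonneg x hx := by
    have ha : 0 < a := ha'.trans_lt haa'
    refine sub_nonneg.2 (le_of_mul_le_mul_right ?_ ha)
    nlinarith [hgap x hx, hφ.nonneg x hx, Real.one_le_exp ha.le, mul_nonneg hC ha.le]
  le_exp_mul x hx y hy := by
    have ha : 0 ≤ a := ha'.trans haa'.le
    have hφy : 0 ≤ φ y := hφ.nonneg y hy
    have hpay : C * (Real.exp (a * dist x y) - 1) ≤
        (Real.exp (a * dist x y) - Real.exp (a' * dist x y)) * φ y :=
      calc C * (Real.exp (a * dist x y) - 1)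
          ≤ C * (dist x y * (a * Real.exp a)) := by
            gcongr
            exact exp_mul_sub_one_le ha dist_nonneg (hs x hx y hy)
        _ = dist x y * (C * (a * Real.exp a)) := by ring
        _ ≤ dist x y * ((a - a') * φ y) := mul_le_mul_of_nonneg_left (hgap y hy) dist_nonneg
        _ = (a - a') * dist x y * φ y := by ring
        _ ≤ _ := by
            gcongr
            exact sub_mul_le_exp_mul_sub_exp_mul ha' haa'.le dist_nonneg
    linarith [hφ.le_exp_mul x hx y hy]

end PseudoMetricSpace

section Integral

variable {a u v : ℝ} {φ : ℝ → ℝ} {s : Set ℝ} {μ : Measure ℝ} [IsLocallyFiniteMeasure μ]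

theorem intervalIntegrable (hφ : LogLipschitzOn a φ s) (hs : uIcc u v ⊆ s) :
    IntervalIntegrable φ μ u v :=
  (hφ.continuousOn.mono hs).intervalIntegrable

theorem intervalIntegral_le_mul_measureReal (hφ : LogLipschitzOn a φ s) (ha : 0 ≤ a) (huv : u ≤ v)
    (hs : Icc u v ⊆ s) {x : ℝ} (hx : x ∈ Icc u v) :
    ∫ y in u..v, φ y ∂μ ≤ Real.exp (a * (v - u)) * φ x * μ.real (Ioc u v) := by
  calc ∫ y in u..v, φ y ∂μ ≤ ∫ _ in u..v, Real.exp (a * (v - u)) * φ x ∂μ :=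
        intervalIntegral.integral_mono_on huv (hφ.intervalIntegrable (by rwa [uIcc_of_le huv]))
          intervalIntegrable_const fun y hy ↦
            hφ.le_exp_mul_of_dist_le ha (hs hy) (hs hx) (Real.dist_le_of_mem_Icc hy hx)
    _ = _ := by
        rw [intervalIntegral.integral_of_le huv, setIntegral_const, smul_eq_mul, mul_comm]

theorem mul_measureReal_le_exp_mul_intervalIntegral (hφ : LogLipschitzOn a φ s) (ha : 0 ≤ a)
    (huv : u ≤ v) (hs : Icc u v ⊆ s) {x : ℝ} (hx : x ∈ Icc u v) :
    φ x * μ.real (Ioc u v) ≤ Real.exp (a * (v - u)) * ∫ y in u..v, φ y ∂μ := by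
  rw [← intervalIntegral.integral_const_mul]
  calc φ x * μ.real (Ioc u v) = ∫ _ in u..v, φ x ∂μ := by
        rw [intervalIntegral.integral_of_le huv, setIntegral_const, smul_eq_mul, mul_comm]
    _ ≤ _ := intervalIntegral.integral_mono_on huv intervalIntegrable_const
        ((hφ.intervalIntegrable (by rwa [uIcc_of_le huv])).const_mul _) fun y hy ↦
          hφ.le_exp_mul_of_dist_le ha (hs hx) (hs hy) (Real.dist_le_of_mem_Icc hx hy)

end Integral

end LogLipschitzOn

section ExponentialBump

variable {a s t : ℝ}

theorem integral_exp_neg_mul_le (ha : 0 < a) (L : ℝ) :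
    ∫ x in 0..L, Real.exp (-(a * x)) ≤ a⁻¹ := by
  have hinteg : ∫ x in 0..L, Real.exp (-(a * x)) = a⁻¹ * (1 - Real.exp (-(a * L))) := by
    simp [intervalIntegral.integral_comp_mul_left (fun x ↦ Real.exp (-x)) ha.ne',
      intervalIntegral.integral_comp_neg]
  rw [hinteg]
  exact mul_le_of_le_one_right (inv_nonneg.2 ha.le) (sub_le_self _ (Real.exp_nonneg _))

theorem integral_exp_neg_mul_infDist_Icc_le (ha : 0 < a) (hs : 0 ≤ s) (hst : s ≤ t) (ht : t ≤ 1) :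
    ∫ x in 0..1, Real.exp (-(a * Metric.infDist x (Icc s t))) ≤ t - s + 2 / a := by
  have hcont : Continuous fun x ↦ Real.exp (-(a * Metric.infDist x (Icc s t))) := by fun_prop
  have hbound {x d : ℝ} (hd : ∀ y ∈ Icc s t, d ≤ dist x y) :
      Real.exp (-(a * Metric.infDist x (Icc s t))) ≤ Real.exp (-(a * d)) := by
    gcongr
    exact (Metric.le_infDist (nonempty_Icc.2 hst)).2 hd
  have hleft : ∫ x in 0..s, Real.exp (-(a * Metric.infDist x (Icc s t))) ≤ a⁻¹ :=
    calc ∫ x in 0..s, Real.exp (-(a * Metric.infDist x (Icc s t)))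
        ≤ ∫ x in 0..s, Real.exp (-(a * (s - x))) :=
          intervalIntegral.integral_mono_on hs (hcont.intervalIntegrable _ _)
            (Continuous.intervalIntegrable (by fun_prop) _ _) fun x _ ↦ hbound fun y hy ↦ by
              rw [dist_comm]
              exact (sub_le_sub_right hy.1 x).trans (le_abs_self _)
      _ ≤ a⁻¹ := by
          rw [intervalIntegral.integral_comp_sub_left fun x ↦ Real.exp (-(a * x)), sub_self]
          exact integral_exp_neg_mul_le ha _
  have hmiddle : ∫ x in s..t, Real.exp (-(a * Metric.infDist x (Icc s t))) ≤ t - s :=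
    calc ∫ x in s..t, Real.exp (-(a * Metric.infDist x (Icc s t))) ≤ ∫ _ in s..t, (1 : ℝ) :=
          intervalIntegral.integral_mono_on hst (hcont.intervalIntegrable _ _)
            intervalIntegrable_const fun x _ ↦ by
              simpa using hbound (x := x) (d := 0) fun y _ ↦ dist_nonneg
      _ = t - s := by simp
  have hright : ∫ x in t..1, Real.exp (-(a * Metric.infDist x (Icc s t))) ≤ a⁻¹ :=
    calc ∫ x in t..1, Real.exp (-(a * Metric.infDist x (Icc s t)))
        ≤ ∫ x in t..1, Real.exp (-(a * (x - t))) :=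
          intervalIntegral.integral_mono_on ht (hcont.intervalIntegrable _ _)
            (Continuous.intervalIntegrable (by fun_prop) _ _) fun x _ ↦ hbound fun y hy ↦
              (sub_le_sub_left hy.2 x).trans (le_abs_self _)
      _ ≤ a⁻¹ := by
          rw [intervalIntegral.integral_comp_sub_right fun x ↦ Real.exp (-(a * x)), sub_self]
          exact integral_exp_neg_mul_le ha _
  rw [← intervalIntegral.integral_add_adjacent_intervals (hcont.intervalIntegrable 0 s)
      (hcont.intervalIntegrable s 1), ← intervalIntegral.integral_add_adjacent_intervals
      (hcont.intervalIntegrable s t) (hcont.intervalIntegrable t 1), div_eq_mul_inv]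
  linarith

end ExponentialBump

namespace NonlinearIFS

variable (S : NonlinearIFS)

section Branches

theorem b_pos (k : ℕ) : 0 < S.b k :=
  (S.b_anti.antitone.le_of_tendsto S.b_lim (k + 1)).trans_lt (S.b_anti k.lt_succ_self)

theorem b_le_one (k : ℕ) : S.b k ≤ 1 :=
  S.b_zero ▸ S.b_anti.antitone k.zero_le

theorem cylinder_subset (k : ℕ) : Icc (S.b (k + 1)) (S.b k) ⊆ Icc 0 1 :=
  Icc_subset_Icc (S.b_pos _).le (S.b_le_one _)

theorem g_mapsTo_cylinder (k : ℕ) :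
    MapsTo (S.g (k + 1)) (Icc 0 1) (Icc (S.b (k + 1)) (S.b k)) :=
  mapsTo_iff_image_subset.2 (S.g_image (k + 1) k.succ_pos).subset

theorem g_mapsTo (k : ℕ) : MapsTo (S.g (k + 1)) (Icc 0 1) (Icc 0 1) :=
  (S.g_mapsTo_cylinder k).mono_right (S.cylinder_subset k)

theorem g_antitoneOn (k : ℕ) : AntitoneOn (S.g (k + 1)) (Icc 0 1) :=
  (S.g_anti (k + 1) k.succ_pos).antitoneOn

theorem g_continuousOn (k : ℕ) : ContinuousOn (S.g (k + 1)) (Icc 0 1) :=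
  fun x hx ↦ (S.deriv1 (k + 1) k.succ_pos x hx).continuousAt.continuousWithinAt

theorem g'_continuousOn (k : ℕ) : ContinuousOn (S.g' (k + 1)) (Icc 0 1) :=
  fun x hx ↦ (S.deriv2 (k + 1) k.succ_pos x hx).continuousAt.continuousWithinAt

theorem g'_abs_pos (k : ℕ) {x : ℝ} (hx : x ∈ Icc (0 : ℝ) 1) : 0 < |S.g' (k + 1) x| :=
  abs_pos.2 (S.deriv_ne (k + 1) k.succ_pos x hx)

theorem g_apply_zero (k : ℕ) : S.g (k + 1) 0 = S.b k := S.g_zero (k + 1) k.succ_pos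

theorem g_apply_one (k : ℕ) : S.g (k + 1) 1 = S.b (k + 1) := S.g_one (k + 1) k.succ_pos

variable {S} {k : ℕ} {u v : ℝ}

theorem g_image_Icc (hu : 0 ≤ u) (huv : u ≤ v) (hv : v ≤ 1) :
    S.g (k + 1) '' Icc u v = Icc (S.g (k + 1) v) (S.g (k + 1) u) :=
  have hsub : Icc u v ⊆ Icc 0 1 := Icc_subset_Icc hu hv
  ((S.g_continuousOn k).mono hsub).image_Icc_of_antitoneOn huv ((S.g_antitoneOn k).mono hsub)

theorem exists_g_sub_eq (hu : 0 ≤ u) (huv : u ≤ v) (hv : v ≤ 1) :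
    ∃ z ∈ Icc u v, S.g (k + 1) u - S.g (k + 1) v = |S.g' (k + 1) z| * (v - u) := by
  rcases huv.eq_or_lt with rfl | hlt
  · exact ⟨u, by simp⟩
  have hsub : Icc u v ⊆ Icc 0 1 := Icc_subset_Icc hu hv
  obtain ⟨z, hz, hslope⟩ := exists_hasDerivAt_eq_slope _ _ hlt ((S.g_continuousOn k).mono hsub)
    fun x hx ↦ S.deriv1 (k + 1) k.succ_pos x (hsub (Ioo_subset_Icc_self hx))
  have hanti : S.g (k + 1) v ≤ S.g (k + 1) u :=
    S.g_antitoneOn k ⟨hu, huv.trans hv⟩ ⟨hu.trans huv, hv⟩ huv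
  refine ⟨z, Ioo_subset_Icc_self hz, ?_⟩
  rw [hslope, abs_div, abs_of_nonpos (sub_nonpos.2 hanti), abs_of_pos (sub_pos.2 hlt),
    div_mul_cancel₀ _ (sub_pos.2 hlt).ne', neg_sub]

theorem exists_preimage_Icc {s t : ℝ} (hs : S.b (k + 1) ≤ s) (hst : s < t) (ht : t ≤ S.b k) :
    ∃ u v, 0 ≤ u ∧ u < v ∧ v ≤ 1 ∧ S.g (k + 1) u = t ∧ S.g (k + 1) v = s := by
  have himage := S.g_image (k + 1) k.succ_pos
  obtain ⟨u, hu, rfl⟩ := himage.superset ⟨hs.trans hst.le, ht⟩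
  obtain ⟨v, hv, rfl⟩ := himage.superset ⟨hs, hst.le.trans ht⟩
  exact ⟨u, v, hu.1, (S.g_antitoneOn k).reflect_lt hv hu hst, hv.2, rfl, rfl⟩

theorem exists_mem_cylinder {x : ℝ} (hx0 : 0 < x) (hx1 : x < 1) :
    ∃ i, S.b (i + 1) ≤ x ∧ x < S.b i := by
  have hex : ∃ j, S.b j ≤ x := (S.b_lim.eventually (eventually_le_nhds hx0)).exists
  obtain ⟨j, ⟨hj, hmin⟩⟩ := Nat.findX hex
  match j with
  | 0 => exact absurd hj (by rw [S.b_zero]; exact hx1.not_ge)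
  | i + 1 => exact ⟨i, hj, not_le.1 (hmin i i.lt_succ_self)⟩

end Branches

section Distortion

/-- The constant `c` of condition (N3). -/
def logDerivBound : ℝ := S.N3.choose

/-- The constant `α` of condition (N5). -/
def contractionRatio : ℝ := S.N5.choose

theorem logDerivBound_pos : 0 < S.logDerivBound := S.N3.choose_spec.1

theorem contractionRatio_lt_one : S.contractionRatio < 1 := S.N5.choose_spec.1

theorem g'_abs_le_contractionRatio (k : ℕ) {x : ℝ} (hx : x ∈ Icc (0 : ℝ) 1) :
    |S.g' (k + 1) x| ≤ S.contractionRatio :=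
  (S.N5.choose_spec.2 (k + 1) k.succ_pos x hx).le

theorem contractionRatio_pos : 0 < S.contractionRatio :=
  (S.g'_abs_pos 0 (left_mem_Icc.2 zero_le_one)).trans_le
    (S.g'_abs_le_contractionRatio 0 (left_mem_Icc.2 zero_le_one))

theorem logLipschitzOn_abs_g' (k : ℕ) :
    LogLipschitzOn S.logDerivBound (fun x ↦ |S.g' (k + 1) x|) (Icc 0 1) where
  nonneg _ _ := abs_nonneg _
  le_exp_mul x hx y hy := by
    have hlip := (convex_Icc (0 : ℝ) 1).norm_image_sub_le_of_norm_hasDerivWithin_le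
      (f := fun z ↦ Real.log (S.g' (k + 1) z))
      (fun z hz ↦ ((S.deriv2 (k + 1) k.succ_pos z hz).log
        (S.deriv_ne (k + 1) k.succ_pos z hz)).hasDerivWithinAt)
      (fun z hz ↦ (S.N3.choose_spec.2 (k + 1) k.succ_pos z hz).le) hy hx
    rw [← Real.exp_log (S.g'_abs_pos k hx), ← Real.exp_log (S.g'_abs_pos k hy), Real.log_abs,
      Real.log_abs, ← Real.exp_add, Real.exp_le_exp, ← sub_le_iff_le_add]
    exact (le_abs_self _).trans hlip

theorem dist_g_le (k : ℕ) {x y : ℝ} (hx : x ∈ Icc (0 : ℝ) 1) (hy : y ∈ Icc (0 : ℝ) 1) :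
    dist (S.g (k + 1) x) (S.g (k + 1) y) ≤ S.contractionRatio * dist x y := by
  rw [dist_eq_norm, dist_eq_norm]
  exact (convex_Icc (0 : ℝ) 1).norm_image_sub_le_of_norm_hasDerivWithin_le
    (fun z hz ↦ (S.deriv1 (k + 1) k.succ_pos z hz).hasDerivWithinAt)
    (fun z hz ↦ S.g'_abs_le_contractionRatio k hz) hy hx

variable {S}

theorem g_sub_le {k : ℕ} {u v : ℝ} (hu : 0 ≤ u) (huv : u ≤ v) (hv : v ≤ 1) :
    S.g (k + 1) u - S.g (k + 1) v ≤ S.contractionRatio * (v - u) := by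
  obtain ⟨z, hz, heq⟩ := exists_g_sub_eq (S := S) (k := k) hu huv hv
  rw [heq]
  have := S.g'_abs_le_contractionRatio k (Icc_subset_Icc hu hv hz)
  gcongr

theorem abs_div_abs_le_distortion {f' : ℝ → ℝ} {a : ℝ} (ha : 0 ≤ a)
    (hf' : LogLipschitzOn a (fun x ↦ |f' x|) (Icc 0 1)) {x y : ℝ} (hx : x ∈ Icc (0 : ℝ) 1)
    (hy : y ∈ Icc (0 : ℝ) 1) : |f' y| / |f' x| ≤ distortion f' := by
  have hbound : ∀ x ∈ Icc (0 : ℝ) 1, ∀ y ∈ Icc (0 : ℝ) 1, |f' y| / |f' x| ≤ Real.exp (a * 1) :=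
    fun x hx y hy ↦ div_le_of_le_mul₀ (abs_nonneg _) (Real.exp_nonneg _)
      (hf'.le_exp_mul_of_dist_le ha hy hx (by simpa using Real.dist_le_of_mem_Icc hy hx))
  calc |f' y| / |f' x| ≤ ⨆ y ∈ Icc (0 : ℝ) 1, |f' y| / |f' x| :=
        le_biSup_of_forall_le (hbound x hx) hy
    _ ≤ distortion f' :=
        le_biSup_of_forall_le (f := fun x ↦ ⨆ y ∈ Icc (0 : ℝ) 1, |f' y| / |f' x|)
          (fun x hx ↦ Real.iSup_le (fun y ↦ Real.iSup_le (hbound x hx y) (Real.exp_nonneg _))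
            (Real.exp_nonneg _)) hx

variable (S)

theorem eventually_b_le_mul_b_succ {q : ℝ} (hq : 1 < q) :
    ∀ᶠ k in atTop, S.b k ≤ q * S.b (k + 1) := by
  filter_upwards [S.N2.eventually (eventually_gt_nhds one_pos),
    S.N2.eventually (eventually_le_nhds hq)] with k hpos hle
  rw [← div_le_iff₀ (S.b_pos _)]
  exact (le_biSup_of_biSup_pos hpos (mem_Ici.2 le_rfl)).trans hle

theorem eventually_abs_g'_le_mul {q : ℝ} (hq : 1 < q) :
    ∀ᶠ k in atTop, ∀ x ∈ Icc (0 : ℝ) 1, ∀ y ∈ Icc (0 : ℝ) 1,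
      |S.g' (k + 1) y| ≤ q * |S.g' (k + 1) x| := by
  filter_upwards [((tendsto_add_atTop_iff_nat 1).2 S.N4).eventually (eventually_le_nhds hq)]
    with k hk x hx y hy
  rw [← div_le_iff₀ (S.g'_abs_pos k hx)]
  exact (abs_div_abs_le_distortion S.logDerivBound_pos.le (S.logLipschitzOn_abs_g' k) hx hy).trans
    hk

theorem eventually_abs_g'_le_mul_of_g_sub_lt {q : ℝ} (hq : 1 < q) (k : ℕ) :
    ∀ᶠ δ in 𝓝[>] (0 : ℝ),
    ∀ u v, 0 ≤ u → u ≤ v → v ≤ 1 → S.g (k + 1) u - S.g (k + 1) v < δ →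
      ∀ x ∈ Icc u v, ∀ y ∈ Icc u v, |S.g' (k + 1) y| ≤ q * |S.g' (k + 1) x| := by
  obtain ⟨z₀, hz₀, hmin⟩ := isCompact_Icc.exists_isMinOn (nonempty_Icc.2 zero_le_one)
    (S.g'_continuousOn k).abs
  have hlim : Tendsto (fun δ ↦ Real.exp (S.logDerivBound * (δ / |S.g' (k + 1) z₀|)))
      (𝓝[>] 0) (𝓝 1) := by
    have : Continuous fun δ ↦ Real.exp (S.logDerivBound * (δ / |S.g' (k + 1) z₀|)) := by fun_prop
    simpa using (this.tendsto 0).mono_left nhdsWithin_le_nhds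
  filter_upwards [hlim.eventually (eventually_le_nhds hq)] with δ hδ u v hu huv hv hlt x hx y hy
  have hsub : Icc u v ⊆ Icc 0 1 := Icc_subset_Icc hu hv
  have hlen : v - u ≤ δ / |S.g' (k + 1) z₀| := by
    obtain ⟨z, hz, heq⟩ := exists_g_sub_eq (S := S) (k := k) hu huv hv
    rw [le_div_iff₀ (S.g'_abs_pos k hz₀), mul_comm]
    exact (mul_le_mul_of_nonneg_right (hmin (hsub hz)) (sub_nonneg.2 huv)).trans
      (heq.symm.trans_lt hlt).le
  refine ((S.logLipschitzOn_abs_g' k).le_exp_mul_of_dist_le S.logDerivBound_pos.le (hsub hy)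
    (hsub hx) ((Real.dist_le_of_mem_Icc hy hx).trans hlen)).trans ?_
  gcongr

theorem exists_abs_g'_le_mul_of_g_sub_lt {q : ℝ} (hq : 1 < q) :
    ∃ δ > 0, ∀ k u v, 0 ≤ u → u ≤ v → v ≤ 1 → S.g (k + 1) u - S.g (k + 1) v < δ →
      ∀ x ∈ Icc u v, ∀ y ∈ Icc u v, |S.g' (k + 1) y| ≤ q * |S.g' (k + 1) x| := by
  obtain ⟨K, hK⟩ := eventually_atTop.1 (S.eventually_abs_g'_le_mul hq)
  obtain ⟨δ, hδ, hδ0⟩ := (((eventually_all_finite (finite_lt_nat K)).2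
    fun k _ ↦ S.eventually_abs_g'_le_mul_of_g_sub_lt hq k).and self_mem_nhdsWithin).exists
  refine ⟨δ, hδ0, fun k u v hu huv hv hlt ↦ ?_⟩
  rcases lt_or_ge k K with hkK | hKk
  · exact hδ k hkK u v hu huv hv hlt
  · have hsub : Icc u v ⊆ Icc 0 1 := Icc_subset_Icc hu hv
    exact fun x hx y hy ↦ hK k hKk x (hsub hx) y (hsub hy)

end Distortion

section Dimension

variable {S} in
theorem h_le_one {n : ℕ} (hn : 1 ≤ n) : S.h n ≤ 1 := by
  have hdim : dimH (limitSet S.g n) ≤ 1 := (dimH_mono (subset_univ _)).trans Real.dimH_univ.le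
  rwa [S.h_dim n hn, ENNReal.ofReal_le_one] at hdim

theorem tendsto_h : Tendsto S.h atTop (𝓝 1) := by
  suffices Tendsto (fun n ↦ 1 - S.h n) atTop (𝓝 0) by simpa using this.const_sub 1
  refine tendsto_of_tendsto_of_tendsto_of_le_of_le' tendsto_const_nhds S.N1 ?_ ?_
  · filter_upwards [eventually_ge_atTop 1] with n hn
    exact sub_nonneg.2 (h_le_one hn)
  · filter_upwards [eventually_ge_atTop 1,
      (Real.tendsto_log_atTop.comp tendsto_natCast_atTop_atTop).eventually_ge_atTop 1]
      with n hn hlog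
    exact le_mul_of_one_le_right (sub_nonneg.2 (h_le_one hn)) hlog

theorem eventually_h_mem_Ioc : ∀ᶠ n in atTop, S.h n ∈ Ioc 0 1 :=
  (S.tendsto_h.eventually (eventually_gt_nhds one_pos)).and
    ((eventually_ge_atTop 1).mono fun _ ↦ h_le_one)

theorem tendsto_natCast_rpow_one_sub_h :
    Tendsto (fun n : ℕ ↦ (n : ℝ) ^ (1 - S.h n)) atTop (𝓝 1) := by
  have hexp := (Real.continuous_exp.tendsto 0).comp S.N1
  rw [Real.exp_zero] at hexp
  refine hexp.congr' ?_
  filter_upwards [eventually_gt_atTop 0] with n hn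
  rw [Real.rpow_def_of_pos (Nat.cast_pos.2 hn), Function.comp_apply, mul_comm]

end Dimension

variable {S}

variable (S) in
/-- An atomless probability measure carried by `[b n, 1]` whose mass grows under every branch by at
most the factor `sup |g'| ^ h`. The normalized `h_n`-dimensional Hausdorff measure on `J_n` is the
example of interest. The bound may be required of all branches, and not only of the first `n`,
because the images of the others are null. -/
structure IsSubconformal (n : ℕ) (h : ℝ) (m : Measure ℝ) : Prop where
  isProbabilityMeasure : IsProbabilityMeasure m
  nullSingletonClass : NullSingletonClass m
  measure_compl_eq_zero : m (Icc (S.b n) 1)ᶜ = 0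
  measureReal_image_le : ∀ ⦃k u v L⦄, 0 ≤ u → u ≤ v → v ≤ 1 →
    (∀ x ∈ Icc u v, |S.g' (k + 1) x| ≤ L) →
    m.real (Icc (S.g (k + 1) v) (S.g (k + 1) u)) ≤ L ^ h * m.real (Icc u v)

namespace IsSubconformal

variable {n : ℕ} {h : ℝ} {m : Measure ℝ}

theorem measureReal_Icc_zero_one (hm : S.IsSubconformal n h m) : m.real (Icc 0 1) = 1 := by
  have := hm.isProbabilityMeasure
  have hnull : m (Icc 0 1)ᶜ = 0 := measure_mono_null
    (compl_subset_compl.2 (Icc_subset_Icc_left (S.b_pos n).le)) hm.measure_compl_eq_zero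
  rw [measureReal_def, (prob_compl_eq_zero_iff measurableSet_Icc).1 hnull, ENNReal.toReal_one]

theorem measureReal_eq_zero_of_subset_Iic (hm : S.IsSubconformal n h m) {A : Set ℝ}
    (hA : A ⊆ Iic (S.b n)) : m.real A = 0 := by
  have := hm.nullSingletonClass
  have hcover : A ⊆ (Icc (S.b n) 1)ᶜ ∪ {S.b n} := fun x hx ↦
    (hA hx).lt_or_eq.imp (fun hlt hmem ↦ hlt.not_ge hmem.1) id
  rw [measureReal_def, measure_mono_null hcover
    (measure_union_null hm.measure_compl_eq_zero (measure_singleton _)), ENNReal.toReal_zero]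

theorem measureReal_image_le_mul_rpow (hm : S.IsSubconformal n h m) (h1 : h ≤ 1)
    {k : ℕ} {u v κ B : ℝ} (hu : 0 ≤ u) (huv : u ≤ v) (hv : v ≤ 1)
    (hκ : ∀ x ∈ Icc u v, ∀ y ∈ Icc u v, |S.g' (k + 1) y| ≤ κ * |S.g' (k + 1) x|) (hB : 0 ≤ B)
    (hmB : m.real (Icc u v) ≤ B * (v - u) ^ h) :
    m.real (Icc (S.g (k + 1) v) (S.g (k + 1) u)) ≤
      κ * B * (S.g (k + 1) u - S.g (k + 1) v) ^ h := by
  obtain ⟨z, hz, hslope⟩ := exists_g_sub_eq (S := S) (k := k) hu huv hv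
  have hκ1 : 1 ≤ κ := le_of_mul_le_mul_right (by simpa using hκ z hz z hz)
    (S.g'_abs_pos k (Icc_subset_Icc hu hv hz))
  have huv0 : 0 ≤ v - u := sub_nonneg.2 huv
  calc m.real (Icc (S.g (k + 1) v) (S.g (k + 1) u))
      ≤ (κ * |S.g' (k + 1) z|) ^ h * m.real (Icc u v) :=
        hm.measureReal_image_le hu huv hv (hκ z hz)
    _ ≤ (κ * |S.g' (k + 1) z|) ^ h * (B * (v - u) ^ h) := by gcongr
    _ = κ ^ h * B * (|S.g' (k + 1) z| * (v - u)) ^ h := by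
        rw [Real.mul_rpow (by positivity) (abs_nonneg _), Real.mul_rpow (abs_nonneg _) huv0]
        ring
    _ ≤ κ * B * (S.g (k + 1) u - S.g (k + 1) v) ^ h := by
        rw [hslope]
        gcongr
        exact Real.rpow_le_self_of_one_le hκ1 h1

end IsSubconformal

section Hausdorff

theorem wordComp_mem {w : List ℕ} (hw : ∀ i ∈ w, 1 ≤ i) {x : ℝ} (hx : x ∈ Icc (0 : ℝ) 1) :
    wordComp S.g w x ∈ Icc (0 : ℝ) 1 := by
  induction w with
  | nil => exact hx
  | cons k w ih =>
    obtain ⟨j, rfl⟩ := Nat.exists_eq_add_of_le' (hw k List.mem_cons_self)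
    exact S.g_mapsTo j (ih fun i hi ↦ hw i (List.mem_cons_of_mem _ hi))

variable (S) in
theorem limitSet_subset (n : ℕ) : limitSet S.g n ⊆ Icc (S.b n) 1 := by
  intro y hy
  have hfirst := mem_iInter.1 hy 0
  simp only [mem_iUnion, mem_ofPred_eq] at hfirst
  obtain ⟨w, ⟨hlen, hw⟩, x, hx, rfl⟩ := hfirst
  obtain ⟨i, rfl⟩ := List.length_eq_one_iff.1 hlen
  obtain ⟨hi1, hin⟩ := hw i List.mem_cons_self
  obtain ⟨j, rfl⟩ := Nat.exists_eq_add_of_le' hi1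
  have hmem := S.g_mapsTo_cylinder j hx
  exact ⟨(S.b_anti.antitone hin).trans hmem.1, hmem.2.trans (S.b_le_one j)⟩

theorem eq_of_mem_cylinder {i j : ℕ} {y : ℝ} (hi : y ∈ Ioo (S.b (i + 1)) (S.b i))
    (hj : y ∈ Icc (S.b (j + 1)) (S.b j)) : j = i := by
  have hij : i < j + 1 := S.b_anti.lt_iff_gt.1 (hj.1.trans_lt hi.2)
  have hji : j < i + 1 := S.b_anti.lt_iff_gt.1 (hi.1.trans_le hj.2)
  omega

theorem mem_limitSet_of_g_mem {n k : ℕ} {x : ℝ} (hx : x ∈ Icc (0 : ℝ) 1)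
    (hgx : S.g (k + 1) x ∈ Ioo (S.b (k + 1)) (S.b k)) (hmem : S.g (k + 1) x ∈ limitSet S.g n) :
    x ∈ limitSet S.g n := by
  refine mem_iInter.2 fun l ↦ ?_
  have hlevel := mem_iInter.1 hmem (l + 1)
  simp only [mem_iUnion, mem_ofPred_eq] at hlevel ⊢
  obtain ⟨_ | ⟨i, w⟩, ⟨hlen, hw⟩, z, hz, heq⟩ := hlevel
  · simp at hlen
  obtain ⟨j, rfl⟩ := Nat.exists_eq_add_of_le' (hw i List.mem_cons_self).1
  have hw' : ∀ i ∈ w, 1 ≤ i ∧ i ≤ n := fun i hi ↦ hw i (List.mem_cons_of_mem _ hi)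
  have hz' : wordComp S.g w z ∈ Icc (0 : ℝ) 1 := wordComp_mem (fun i hi ↦ (hw' i hi).1) hz
  change S.g (j + 1) (wordComp S.g w z) = S.g (k + 1) x at heq
  obtain rfl : j = k := eq_of_mem_cylinder hgx (heq ▸ S.g_mapsTo_cylinder j hz')
  exact ⟨w, ⟨by simpa using hlen, hw'⟩, z, hz, (S.g_anti (j + 1) j.succ_pos).injOn hz' hx heq⟩

theorem limitSet_inter_image_subset (n k : ℕ) {u v : ℝ} (hu : 0 ≤ u) (huv : u ≤ v) (hv : v ≤ 1) :
    limitSet S.g n ∩ Icc (S.g (k + 1) v) (S.g (k + 1) u) ⊆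
      S.g (k + 1) '' (limitSet S.g n ∩ Icc u v) ∪ {S.b (k + 1), S.b k} := by
  rintro y ⟨hyJ, hy⟩
  rw [← g_image_Icc hu huv hv] at hy
  obtain ⟨x, hx, rfl⟩ := hy
  have hx01 : x ∈ Icc (0 : ℝ) 1 := Icc_subset_Icc hu hv hx
  obtain ⟨hlow, hupp⟩ := S.g_mapsTo_cylinder k hx01
  rcases hlow.eq_or_lt with hlow | hlow
  · exact Or.inr (Or.inl hlow.symm)
  rcases hupp.eq_or_lt with hupp | hupp
  · exact Or.inr (Or.inr hupp)
  exact Or.inl ⟨x, ⟨mem_limitSet_of_g_mem hx01 ⟨hlow, hupp⟩ hyJ, hx⟩, rfl⟩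

theorem hausdorffMeasure_limitSet_inter_image_le (n : ℕ) {h : ℝ} (h0 : 0 < h) {k : ℕ}
    {u v L : ℝ} (hu : 0 ≤ u) (huv : u ≤ v) (hv : v ≤ 1)
    (hL : ∀ x ∈ Icc u v, |S.g' (k + 1) x| ≤ L) :
    μH[h] (limitSet S.g n ∩ Icc (S.g (k + 1) v) (S.g (k + 1) u)) ≤
      ENNReal.ofReal L ^ h * μH[h] (limitSet S.g n ∩ Icc u v) := by
  have := Measure.nullSingletonClass_hausdorff ℝ h0
  have hlip : LipschitzOnWith L.toNNReal (S.g (k + 1)) (Icc u v) :=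
    (convex_Icc u v).lipschitzOnWith_of_nnnorm_hasDerivWithin_le
      (fun x hx ↦ (S.deriv1 (k + 1) k.succ_pos x (Icc_subset_Icc hu hv hx)).hasDerivWithinAt)
      (fun x hx ↦ by simpa [← NNReal.coe_le_coe] using Or.inl (hL x hx))
  calc _ ≤ μH[h] (S.g (k + 1) '' (limitSet S.g n ∩ Icc u v)) + μH[h] {S.b (k + 1), S.b k} :=
        (measure_mono (limitSet_inter_image_subset n k hu huv hv)).trans (measure_union_le _ _)
    _ = μH[h] (S.g (k + 1) '' (limitSet S.g n ∩ Icc u v)) := by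
        rw [(Set.toFinite {S.b (k + 1), S.b k}).measure_zero, add_zero]
    _ ≤ _ := (hlip.mono inter_subset_right).hausdorffMeasure_image_le h0.le

theorem isSubconformal_cond_hausdorffMeasure {n : ℕ} {h : ℝ} (h0 : 0 < h)
    (hJ0 : μH[h] (limitSet S.g n) ≠ 0) (hJtop : μH[h] (limitSet S.g n) ≠ ⊤) :
    S.IsSubconformal n h (ProbabilityTheory.cond μH[h] (limitSet S.g n)) where
  isProbabilityMeasure := ProbabilityTheory.cond_isProbabilityMeasure_of_finite hJ0 hJtop
  nullSingletonClass := by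
    have := Measure.nullSingletonClass_hausdorff ℝ h0
    exact ⟨fun x ↦ by simp [ProbabilityTheory.cond]⟩
  measure_compl_eq_zero := by
    rw [ProbabilityTheory.cond_apply' measurableSet_Icc.compl,
      (disjoint_compl_right.mono_left (S.limitSet_subset n)).inter_eq, measure_empty, mul_zero]
  measureReal_image_le k u v L hu huv hv hL := by
    have hL0 : 0 ≤ L := (abs_nonneg _).trans (hL u (left_mem_Icc.2 huv))
    have hfin : μH[h] (limitSet S.g n ∩ Icc u v) ≠ ⊤ :=
      measure_ne_top_of_subset inter_subset_left hJtop
    have hle := ENNReal.toReal_mono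
      (ENNReal.mul_ne_top (ENNReal.rpow_ne_top_of_nonneg h0.le ENNReal.ofReal_ne_top) hfin)
      (hausdorffMeasure_limitSet_inter_image_le n h0 hu huv hv hL)
    rw [ENNReal.toReal_mul, ← ENNReal.toReal_rpow, ENNReal.toReal_ofReal hL0] at hle
    simp only [measureReal_def, ProbabilityTheory.cond_apply' measurableSet_Icc,
      ENNReal.toReal_mul]
    rw [mul_left_comm]
    gcongr

theorem normMeas_eq_cond {n : ℕ} {A : Set ℝ} (hA : MeasurableSet A) :
    normMeas S n A = ProbabilityTheory.cond μH[S.h n] (limitSet S.g n) A := by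
  rw [normMeas, ProbabilityTheory.cond_apply' hA, ENNReal.div_eq_inv_mul, inter_comm]

end Hausdorff

section TransferOperator

variable (S) in
/-- The contribution of the branch `g (k + 1)` to the transfer operator. -/
def branchTerm (h : ℝ) (φ : ℝ → ℝ) (k : ℕ) (x : ℝ) : ℝ :=
  |S.g' (k + 1) x| ^ h * φ (S.g (k + 1) x)

variable (S) in
/-- The Perron–Frobenius–Ruelle transfer operator of `S_n = {g_1, …, g_n}` with exponent `h`. -/
def transferOperator (n : ℕ) (h : ℝ) (φ : ℝ → ℝ) (x : ℝ) : ℝ :=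
  ∑ k ∈ Finset.range n, S.branchTerm h φ k x

variable {n : ℕ} {a h : ℝ} {φ : ℝ → ℝ} {m : Measure ℝ}

theorem logLipschitzOn_branchTerm (ha : 0 ≤ a) (h0 : 0 ≤ h) (h1 : h ≤ 1)
    (hφ : LogLipschitzOn a φ (Icc 0 1)) (k : ℕ) :
    LogLipschitzOn (S.logDerivBound + a * S.contractionRatio) (S.branchTerm h φ k) (Icc 0 1) :=
  (((S.logLipschitzOn_abs_g' k).rpow h0).mul
    (hφ.comp ha (S.g_mapsTo k) fun _ hx _ hy ↦ S.dist_g_le k hx hy)).mono <| by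
      gcongr
      exact mul_le_of_le_one_left S.logDerivBound_pos.le h1

theorem logLipschitzOn_transferOperator (ha : 0 ≤ a) (h0 : 0 ≤ h) (h1 : h ≤ 1)
    (hφ : LogLipschitzOn a φ (Icc 0 1)) (n : ℕ) :
    LogLipschitzOn (S.logDerivBound + a * S.contractionRatio) (S.transferOperator n h φ)
      (Icc 0 1) :=
  .sum fun k _ ↦ logLipschitzOn_branchTerm ha h0 h1 hφ k

theorem sum_integral_cylinder {μ : Measure ℝ} [IsLocallyFiniteMeasure μ]
    (hφ : ContinuousOn φ (Icc 0 1)) (n : ℕ) :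
    ∑ k ∈ Finset.range n, ∫ x in S.b (k + 1)..S.b k, φ x ∂μ = ∫ x in S.b n..1, φ x ∂μ := by
  have hinteg (k : ℕ) : IntervalIntegrable φ μ (S.b k) (S.b (k + 1)) := by
    refine (hφ.mono ?_).intervalIntegrable
    rw [uIcc_of_ge (S.b_anti k.lt_succ_self).le]
    exact S.cylinder_subset k
  rw [intervalIntegral.integral_symm, ← S.b_zero,
    ← intervalIntegral.sum_integral_adjacent_intervals fun k _ ↦ hinteg k, ← Finset.sum_neg_distrib]
  exact Finset.sum_congr rfl fun k _ ↦ intervalIntegral.integral_symm _ _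

namespace IsSubconformal

theorem measureReal_image_le_exp_mul (hm : S.IsSubconformal n h m) (h1 : h ≤ 1) (k : ℕ)
    {u v : ℝ} (hu : 0 ≤ u) (huv : u ≤ v) (hv : v ≤ 1) :
    m.real (Icc (S.g (k + 1) v) (S.g (k + 1) u)) ≤
      Real.exp (S.logDerivBound * (v - u)) * |S.g' (k + 1) u| ^ h * m.real (Icc u v) := by
  have hc := S.logDerivBound_pos.le
  have hsub : Icc u v ⊆ Icc 0 1 := Icc_subset_Icc hu hv
  have humem : u ∈ Icc u v := left_mem_Icc.2 huv
  refine (hm.measureReal_image_le hu huv hv fun x hx ↦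
    (S.logLipschitzOn_abs_g' k).le_exp_mul_of_dist_le hc (hsub hx) (hsub humem)
      (Real.dist_le_of_mem_Icc hx humem)).trans ?_
  rw [Real.mul_rpow (Real.exp_nonneg _) (abs_nonneg _)]
  gcongr
  exact Real.rpow_le_self_of_one_le (Real.one_le_exp (mul_nonneg hc (sub_nonneg.2 huv))) h1

theorem integral_image_le_exp_mul_integral_branchTerm (hm : S.IsSubconformal n h m) (ha : 0 ≤ a)
    (h0 : 0 ≤ h) (h1 : h ≤ 1) (hφ : LogLipschitzOn a φ (Icc 0 1)) (k : ℕ) {u v : ℝ}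
    (hu : 0 ≤ u) (huv : u ≤ v) (hv : v ≤ 1) :
    ∫ x in S.g (k + 1) v..S.g (k + 1) u, φ x ∂m ≤
      Real.exp (2 * (S.logDerivBound + a) * (v - u)) * ∫ x in u..v, S.branchTerm h φ k x ∂m := by
  have := hm.isProbabilityMeasure
  have := hm.nullSingletonClass
  have hc := S.logDerivBound_pos.le
  have hα := S.contractionRatio_lt_one.le
  have hsub : Icc u v ⊆ Icc 0 1 := Icc_subset_Icc hu hv
  have humem : u ∈ Icc u v := left_mem_Icc.2 huv
  have hgle : S.g (k + 1) v ≤ S.g (k + 1) u :=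
    S.g_antitoneOn k (hsub humem) (hsub (right_mem_Icc.2 huv)) huv
  have hψ : LogLipschitzOn (S.logDerivBound + a) (S.branchTerm h φ k) (Icc 0 1) :=
    (logLipschitzOn_branchTerm ha h0 h1 hφ k).mono (by
      gcongr
      exact mul_le_of_le_one_right ha hα)
  have hφgu : 0 ≤ φ (S.g (k + 1) u) := hφ.nonneg _ (S.g_mapsTo k (hsub humem))
  have hlen : S.g (k + 1) u - S.g (k + 1) v ≤ v - u :=
    (g_sub_le hu huv hv).trans (mul_le_of_le_one_left (sub_nonneg.2 huv) hα)
  calc ∫ x in S.g (k + 1) v..S.g (k + 1) u, φ x ∂m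
      ≤ Real.exp (a * (S.g (k + 1) u - S.g (k + 1) v)) * φ (S.g (k + 1) u) *
          m.real (Ioc (S.g (k + 1) v) (S.g (k + 1) u)) :=
        hφ.intervalIntegral_le_mul_measureReal ha hgle
          ((g_image_Icc hu huv hv).symm.subset.trans
            ((S.g_mapsTo k).mono_left hsub).image_subset) (right_mem_Icc.2 hgle)
    _ ≤ Real.exp (a * (v - u)) * φ (S.g (k + 1) u) *
          (Real.exp (S.logDerivBound * (v - u)) * |S.g' (k + 1) u| ^ h * m.real (Ioc u v)) := by
        rw [measureReal_congr Ioc_ae_eq_Icc, measureReal_congr Ioc_ae_eq_Icc]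
        gcongr
        exact hm.measureReal_image_le_exp_mul h1 k hu huv hv
    _ = Real.exp ((S.logDerivBound + a) * (v - u)) *
          (S.branchTerm h φ k u * m.real (Ioc u v)) := by
        rw [branchTerm, add_mul, Real.exp_add]
        ring
    _ ≤ Real.exp ((S.logDerivBound + a) * (v - u)) *
          (Real.exp ((S.logDerivBound + a) * (v - u)) * ∫ x in u..v, S.branchTerm h φ k x ∂m) :=
        mul_le_mul_of_nonneg_left (hψ.mul_measureReal_le_exp_mul_intervalIntegral
          (add_nonneg hc ha) huv hsub humem) (Real.exp_nonneg _)
    _ = _ := by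
        rw [← mul_assoc, ← Real.exp_add]
        ring_nf

theorem integral_cylinder_le_integral_branchTerm (hm : S.IsSubconformal n h m) (ha : 0 ≤ a)
    (h0 : 0 ≤ h) (h1 : h ≤ 1) (hφ : LogLipschitzOn a φ (Icc 0 1)) (k : ℕ) :
    ∫ x in S.b (k + 1)..S.b k, φ x ∂m ≤ ∫ x in 0..1, S.branchTerm h φ k x ∂m := by
  have := hm.isProbabilityMeasure
  have hmem {u w v : ℝ} (hu : 0 ≤ u) (huw : u ≤ w) (hwv : w ≤ v) (hv : v ≤ 1) :
      w ∈ Icc (0 : ℝ) 1 := ⟨hu.trans huw, hwv.trans hv⟩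
  have hinteg {ψ : ℝ → ℝ} {a x y : ℝ} (hψ : LogLipschitzOn a ψ (Icc 0 1)) (hx : x ∈ Icc (0 : ℝ) 1)
      (hy : y ∈ Icc (0 : ℝ) 1) : IntervalIntegrable ψ m x y :=
    hψ.intervalIntegrable (uIcc_subset_Icc hx hy)
  have hψ := logLipschitzOn_branchTerm (S := S) ha h0 h1 hφ k
  have hg {x : ℝ} (hx : x ∈ Icc (0 : ℝ) 1) := S.g_mapsTo k hx
  rw [← S.g_apply_zero k, ← S.g_apply_one k]
  refine le_of_le_exp_mul_of_add_le
    (F := fun u v ↦ ∫ x in S.g (k + 1) v..S.g (k + 1) u, φ x ∂m)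
    (G := fun u v ↦ ∫ x in u..v, S.branchTerm h φ k x ∂m) zero_le_one ?_ ?_
    fun u v hu huv hv ↦ hm.integral_image_le_exp_mul_integral_branchTerm ha h0 h1 hφ k hu huv hv
  · intro u w v hu huw hwv hv
    have hu' := hmem hu le_rfl (huw.trans hwv) hv
    have hw' := hmem hu huw hwv hv
    have hv' := hmem hu (huw.trans hwv) le_rfl hv
    exact (intervalIntegral.integral_add_adjacent_intervals
      (hinteg hφ (hg hv') (hg hw')) (hinteg hφ (hg hw') (hg hu'))).ge.trans_eq (add_comm _ _)
  · intro u w v hu huw hwv hv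
    have hu' := hmem hu le_rfl (huw.trans hwv) hv
    have hw' := hmem hu huw hwv hv
    have hv' := hmem hu (huw.trans hwv) le_rfl hv
    rw [intervalIntegral.integral_add_adjacent_intervals (hinteg hψ hu' hw') (hinteg hψ hw' hv')]

theorem integral_le_integral_transferOperator (hm : S.IsSubconformal n h m) (ha : 0 ≤ a)
    (h0 : 0 ≤ h) (h1 : h ≤ 1) (hφ : LogLipschitzOn a φ (Icc 0 1)) :
    ∫ x in 0..1, φ x ∂m ≤ ∫ x in 0..1, S.transferOperator n h φ x ∂m := by
  have := hm.isProbabilityMeasure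
  have hbn : S.b n ∈ Icc (0 : ℝ) 1 := ⟨(S.b_pos n).le, S.b_le_one n⟩
  have hnull : ∫ x in 0..S.b n, φ x ∂m = 0 := by
    rw [intervalIntegral.integral_of_le hbn.1]
    exact setIntegral_measure_zero _ ((measureReal_eq_zero_iff).1
      (hm.measureReal_eq_zero_of_subset_Iic fun x hx ↦ hx.2))
  calc ∫ x in 0..1, φ x ∂m = ∫ x in S.b n..1, φ x ∂m := by
        rw [← intervalIntegral.integral_add_adjacent_intervals (b := S.b n)
          (hφ.intervalIntegrable (uIcc_subset_Icc (left_mem_Icc.2 zero_le_one) hbn))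
          (hφ.intervalIntegrable (uIcc_subset_Icc hbn (right_mem_Icc.2 zero_le_one))),
          hnull, zero_add]
    _ = ∑ k ∈ Finset.range n, ∫ x in S.b (k + 1)..S.b k, φ x ∂m :=
        (sum_integral_cylinder hφ.continuousOn n).symm
    _ ≤ ∑ k ∈ Finset.range n, ∫ x in 0..1, S.branchTerm h φ k x ∂m :=
        Finset.sum_le_sum fun k _ ↦ hm.integral_cylinder_le_integral_branchTerm ha h0 h1 hφ k
    _ = ∫ x in 0..1, S.transferOperator n h φ x ∂m :=
        (intervalIntegral.integral_finsetSum fun k _ ↦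
          (logLipschitzOn_branchTerm ha h0 h1 hφ k).intervalIntegrable
            (uIcc_of_le (zero_le_one' ℝ)).subset).symm

end IsSubconformal

variable (φ) in
theorem integral_branchTerm_one (k : ℕ) :
    ∫ x in 0..1, S.branchTerm 1 φ k x = ∫ x in S.b (k + 1)..S.b k, φ x := by
  rw [intervalIntegral.integral_of_le zero_le_one,
    intervalIntegral.integral_of_le (S.b_anti k.lt_succ_self).le, ← integral_Icc_eq_integral_Ioc,
    ← integral_Icc_eq_integral_Ioc]
  have hsubst := integral_image_eq_integral_abs_deriv_smul measurableSet_Icc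
    (fun x hx ↦ (S.deriv1 (k + 1) k.succ_pos x hx).hasDerivWithinAt)
    (S.g_anti (k + 1) k.succ_pos).injOn φ
  rw [S.g_image (k + 1) k.succ_pos, Nat.add_sub_cancel] at hsubst
  simp only [branchTerm, Real.rpow_one, hsubst, smul_eq_mul]

theorem integral_transferOperator_one_le (ha : 0 ≤ a) (hφ : LogLipschitzOn a φ (Icc 0 1)) :
    ∫ x in 0..1, S.transferOperator n 1 φ x ≤ ∫ x in 0..1, φ x := by
  have hbn : S.b n ∈ Icc (0 : ℝ) 1 := ⟨(S.b_pos n).le, S.b_le_one n⟩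
  calc ∫ x in 0..1, S.transferOperator n 1 φ x
      = ∑ k ∈ Finset.range n, ∫ x in 0..1, S.branchTerm 1 φ k x :=
        intervalIntegral.integral_finsetSum fun k _ ↦
          (logLipschitzOn_branchTerm ha zero_le_one le_rfl hφ k).intervalIntegrable
            (uIcc_of_le zero_le_one).subset
    _ = ∫ x in S.b n..1, φ x := by
        simp only [integral_branchTerm_one]
        exact sum_integral_cylinder hφ.continuousOn n
    _ ≤ ∫ x in 0..1, φ x := by
        refine intervalIntegral.integral_mono_interval hbn.1 hbn.2 le_rfl ?_
          (hφ.intervalIntegrable (uIcc_of_le zero_le_one).subset)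
        filter_upwards [ae_restrict_mem measurableSet_Ioc] with x hx
          using hφ.nonneg x (Ioc_subset_Icc_self hx)

theorem transferOperator_le (hn : 0 < n) (ha : 0 ≤ a) (h0 : 0 ≤ h) (h1 : h ≤ 1)
    (hφ : LogLipschitzOn a φ (Icc 0 1)) {x : ℝ} (hx : x ∈ Icc (0 : ℝ) 1) :
    S.transferOperator n h φ x ≤ (n : ℝ) ^ (1 - h) *
      (S.transferOperator n 1 φ x + (1 - h) * Real.exp a * ∫ y in 0..1, φ y) := by
  have hn0 : (0 : ℝ) < n := Nat.cast_pos.2 hn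
  have hbranch (k : ℕ) : S.branchTerm h φ k x ≤ (n : ℝ) ^ (1 - h) *
      (S.branchTerm 1 φ k x + (1 - h) / n * (Real.exp a * ∫ y in 0..1, φ y)) := by
    have hgx := S.g_mapsTo k hx
    have hφgx : 0 ≤ φ (S.g (k + 1) x) := hφ.nonneg _ hgx
    have hmean : φ (S.g (k + 1) x) ≤ Real.exp a * ∫ y in 0..1, φ y := by
      simpa using hφ.mul_measureReal_le_exp_mul_intervalIntegral (μ := volume) ha zero_le_one
        subset_rfl hgx
    calc S.branchTerm h φ k x
        ≤ (n : ℝ) ^ (1 - h) * (h * |S.g' (k + 1) x| + (1 - h) / n) * φ (S.g (k + 1) x) := by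
          unfold branchTerm
          gcongr
          exact rpow_le_card_rpow_mul_add h0 h1 (abs_nonneg _) hn0
      _ ≤ (n : ℝ) ^ (1 - h) * (1 * |S.g' (k + 1) x| + (1 - h) / n) * φ (S.g (k + 1) x) := by
          gcongr
      _ = (n : ℝ) ^ (1 - h) * (S.branchTerm 1 φ k x + (1 - h) / n * φ (S.g (k + 1) x)) := by
          rw [branchTerm, Real.rpow_one]
          ring
      _ ≤ _ := by
          have := sub_nonneg.2 h1
          gcongr
  calc S.transferOperator n h φ x
      ≤ ∑ k ∈ Finset.range n, (n : ℝ) ^ (1 - h) *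
          (S.branchTerm 1 φ k x + (1 - h) / n * (Real.exp a * ∫ y in 0..1, φ y)) :=
        Finset.sum_le_sum fun k _ ↦ hbranch k
    _ = _ := by
        rw [← Finset.mul_sum, Finset.sum_add_distrib, Finset.sum_const, Finset.card_range,
          nsmul_eq_mul, transferOperator]
        field_simp

theorem integral_transferOperator_le (hn : 0 < n) (ha : 0 ≤ a) (h0 : 0 ≤ h) (h1 : h ≤ 1)
    (hφ : LogLipschitzOn a φ (Icc 0 1)) :
    ∫ x in 0..1, S.transferOperator n h φ x ≤
      (n : ℝ) ^ (1 - h) * (1 + (1 - h) * Real.exp a) * ∫ x in 0..1, φ x := by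
  have hinteg {h : ℝ} (h0 : 0 ≤ h) (h1 : h ≤ 1) :
      IntervalIntegrable (S.transferOperator n h φ) volume 0 1 :=
    (logLipschitzOn_transferOperator ha h0 h1 hφ n).intervalIntegrable
      (uIcc_of_le zero_le_one).subset
  have hone := integral_transferOperator_one_le (S := S) (n := n) ha hφ
  calc ∫ x in 0..1, S.transferOperator n h φ x
      ≤ ∫ x in 0..1, (n : ℝ) ^ (1 - h) *
          (S.transferOperator n 1 φ x + (1 - h) * Real.exp a * ∫ y in 0..1, φ y) :=
        intervalIntegral.integral_mono_on zero_le_one (hinteg h0 h1)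
          (((hinteg zero_le_one le_rfl).add intervalIntegrable_const).const_mul _)
          fun x hx ↦ transferOperator_le hn ha h0 h1 hφ hx
    _ = (n : ℝ) ^ (1 - h) * ((∫ x in 0..1, S.transferOperator n 1 φ x) +
          (1 - h) * Real.exp a * ∫ y in 0..1, φ y) := by
        rw [intervalIntegral.integral_const_mul, intervalIntegral.integral_add
          (hinteg zero_le_one le_rfl) intervalIntegrable_const]
        simp
    _ ≤ (n : ℝ) ^ (1 - h) * ((∫ x in 0..1, φ x) + (1 - h) * Real.exp a * ∫ y in 0..1, φ y) := by
        gcongr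
    _ = _ := by ring

end TransferOperator

section IntegralComparison

variable {n : ℕ} {a h q : ℝ} {φ : ℝ → ℝ} {m : Measure ℝ}

variable (S) in
/-- The fraction of its mean that can be subtracted from `transferOperator n h φ`, for `φ` with
`a`-Lipschitz logarithm, without leaving that cone. -/
def coneGap (a : ℝ) : ℝ :=
  (a - (S.logDerivBound + a * S.contractionRatio)) / a * Real.exp (-(2 * a))

theorem coneGap_pos (ha : 0 < a) (hgap : S.logDerivBound + a * S.contractionRatio < a) :
    0 < S.coneGap a :=
  mul_pos (div_pos (sub_pos.2 hgap) ha) (Real.exp_pos _)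

theorem coneGap_le_one (ha : 0 < a) : S.coneGap a ≤ 1 := by
  refine mul_le_one₀ ((div_le_one ha).2 (sub_le_self a ?_)) (Real.exp_nonneg _)
    (Real.exp_le_one_iff.2 (by linarith))
  exact add_nonneg S.logDerivBound_pos.le (mul_nonneg ha.le S.contractionRatio_pos.le)

theorem logLipschitzOn_transferOperator_sub_coneGap_mul_integral (ha : 0 < a)
    (hgap : S.logDerivBound + a * S.contractionRatio < a) (h0 : 0 ≤ h) (h1 : h ≤ 1)
    (hφ : LogLipschitzOn a φ (Icc 0 1)) :
    LogLipschitzOn a (fun x ↦ S.transferOperator n h φ x -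
      S.coneGap a * ∫ y in 0..1, S.transferOperator n h φ y) (Icc 0 1) := by
  have hψ := logLipschitzOn_transferOperator (S := S) ha.le h0 h1 hφ n
  have hmean_nonneg : 0 ≤ ∫ y in 0..1, S.transferOperator n h φ y :=
    intervalIntegral.integral_nonneg zero_le_one hψ.nonneg
  refine hψ.sub_const (add_nonneg S.logDerivBound_pos.le
    (mul_nonneg ha.le S.contractionRatio_pos.le)) hgap
    (mul_nonneg (coneGap_pos ha hgap).le hmean_nonneg)
    (fun x hx y hy ↦ by simpa using Real.dist_le_of_mem_Icc hx hy) fun y hy ↦ ?_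
  have hmean : ∫ y in 0..1, S.transferOperator n h φ y ≤
      Real.exp a * S.transferOperator n h φ y := by
    simpa using (hψ.mono hgap.le).intervalIntegral_le_mul_measureReal (μ := volume) ha.le
      zero_le_one subset_rfl hy
  calc S.coneGap a * (∫ y in 0..1, S.transferOperator n h φ y) * (a * Real.exp a)
      = (a - (S.logDerivBound + a * S.contractionRatio)) *
          (Real.exp (-a) * ∫ y in 0..1, S.transferOperator n h φ y) := by
        rw [coneGap, two_mul, neg_add, Real.exp_add, Real.exp_neg]
        field_simp
    _ ≤ _ := by
        refine mul_le_mul_of_nonneg_left ?_ (sub_nonneg.2 hgap.le)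
        rwa [Real.exp_neg, inv_mul_le_iff₀ (Real.exp_pos a)]

namespace IsSubconformal

theorem integral_const (hm : S.IsSubconformal n h m) (c : ℝ) : ∫ _ in 0..1, c ∂m = c := by
  have := hm.nullSingletonClass
  rw [intervalIntegral.integral_of_le zero_le_one, ← integral_Icc_eq_integral_Ioc,
    setIntegral_const, hm.measureReal_Icc_zero_one, one_smul]

theorem integral_le_affine_mul_integral (hm : S.IsSubconformal n h m) (hn : 0 < n) (ha : 0 < a)
    (hgap : S.logDerivBound + a * S.contractionRatio < a) (h0 : 0 ≤ h) (h1 : h ≤ 1) {M : ℝ}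
    (hM0 : 0 ≤ M) (hM : ∀ φ, LogLipschitzOn a φ (Icc 0 1) →
      ∫ x in 0..1, φ x ∂m ≤ M * ∫ x in 0..1, φ x)
    (hφ : LogLipschitzOn a φ (Icc 0 1)) :
    ∫ x in 0..1, φ x ∂m ≤ (n : ℝ) ^ (1 - h) * (1 + (1 - h) * Real.exp a) *
      (S.coneGap a + (1 - S.coneGap a) * M) * ∫ x in 0..1, φ x := by
  have := hm.isProbabilityMeasure
  have hγ0 := (coneGap_pos ha hgap).le
  have hγ1 := sub_nonneg.2 (coneGap_le_one (S := S) ha)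
  have hψ := logLipschitzOn_transferOperator (S := S) ha.le h0 h1 hφ n
  set ψ := S.transferOperator n h φ
  have hinteg {μ : Measure ℝ} [IsLocallyFiniteMeasure μ] : IntervalIntegrable ψ μ 0 1 :=
    hψ.intervalIntegrable (uIcc_of_le zero_le_one).subset
  have hsub := hM _ (logLipschitzOn_transferOperator_sub_coneGap_mul_integral (S := S) (n := n)
    ha hgap h0 h1 hφ)
  rw [intervalIntegral.integral_sub hinteg intervalIntegrable_const, hm.integral_const,
    intervalIntegral.integral_sub hinteg intervalIntegrable_const,
    intervalIntegral.integral_const, sub_zero, one_smul] at hsub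
  calc ∫ x in 0..1, φ x ∂m ≤ ∫ x in 0..1, ψ x ∂m :=
        hm.integral_le_integral_transferOperator ha.le h0 h1 hφ
    _ ≤ (S.coneGap a + (1 - S.coneGap a) * M) * ∫ x in 0..1, ψ x := by
        linarith
    _ ≤ (S.coneGap a + (1 - S.coneGap a) * M) *
          ((n : ℝ) ^ (1 - h) * (1 + (1 - h) * Real.exp a) * ∫ x in 0..1, φ x) :=
        mul_le_mul_of_nonneg_left (integral_transferOperator_le hn ha.le h0 h1 hφ) (by positivity)
    _ = _ := by ring

theorem integral_le_exp_mul_integral (hm : S.IsSubconformal n h m) (ha : 0 ≤ a)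
    (hφ : LogLipschitzOn a φ (Icc 0 1)) :
    ∫ x in 0..1, φ x ∂m ≤ Real.exp (2 * a) * ∫ x in 0..1, φ x := by
  have := hm.isProbabilityMeasure
  have := hm.nullSingletonClass
  have h0mem : (0 : ℝ) ∈ Icc (0 : ℝ) 1 := left_mem_Icc.2 zero_le_one
  calc ∫ x in 0..1, φ x ∂m ≤ Real.exp a * φ 0 := by
        simpa [measureReal_congr (μ := m) Ioc_ae_eq_Icc, hm.measureReal_Icc_zero_one] using
          hφ.intervalIntegral_le_mul_measureReal (μ := m) ha zero_le_one subset_rfl h0mem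
    _ ≤ Real.exp a * (Real.exp a * ∫ x in 0..1, φ x) := by
        refine mul_le_mul_of_nonneg_left ?_ (Real.exp_nonneg a)
        simpa using hφ.mul_measureReal_le_exp_mul_intervalIntegral (μ := volume) ha zero_le_one
          subset_rfl h0mem
    _ = Real.exp (2 * a) * ∫ x in 0..1, φ x := by
        rw [two_mul, Real.exp_add, mul_assoc]

theorem integral_le_mul_integral (hm : S.IsSubconformal n h m) (hn : 0 < n) (ha : 0 < a)
    (hgap : S.logDerivBound + a * S.contractionRatio < a) (h0 : 0 ≤ h) (h1 : h ≤ 1) (hq : 0 < q)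
    (hRq : (n : ℝ) ^ (1 - h) * (1 + (1 - h) * Real.exp a) *
      (S.coneGap a + (1 - S.coneGap a) * q) ≤ q) (hφ : LogLipschitzOn a φ (Icc 0 1)) :
    ∫ x in 0..1, φ x ∂m ≤ q * ∫ x in 0..1, φ x := by
  have hR : 0 < (n : ℝ) ^ (1 - h) * (1 + (1 - h) * Real.exp a) := by
    have := sub_nonneg.2 h1
    positivity
  exact forall_le_mul_of_forall_le_affine_mul (s := {φ | LogLipschitzOn a φ (Icc 0 1)})
    (F := fun φ ↦ ∫ x in 0..1, φ x ∂m) (G := fun φ ↦ ∫ x in 0..1, φ x)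
    (fun φ hφ ↦ intervalIntegral.integral_nonneg zero_le_one hφ.nonneg)
    (fun φ hφ ↦ hm.integral_le_exp_mul_integral ha.le hφ) (Real.exp_nonneg _)
    (fun M hM0 hM φ hφ ↦ hm.integral_le_affine_mul_integral hn ha hgap h0 h1 hM0 hM hφ) hR
    (coneGap_pos ha hgap) (coneGap_le_one ha) hq hRq φ hφ

end IsSubconformal

variable (S) in
theorem eventually_integral_le_mul_integral (a : ℝ) (hq : 1 < q) :
    ∀ᶠ n in atTop, ∀ m, S.IsSubconformal n (S.h n) m → ∀ φ, LogLipschitzOn a φ (Icc 0 1) →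
      ∫ x in 0..1, φ x ∂m ≤ q * ∫ x in 0..1, φ x := by
  have hα := sub_pos.2 S.contractionRatio_lt_one
  obtain ⟨A, haA, hA⟩ : ∃ A, a ≤ A ∧ S.logDerivBound / (1 - S.contractionRatio) < A :=
    ⟨max a (S.logDerivBound / (1 - S.contractionRatio) + 1), le_max_left _ _,
      (lt_add_one _).trans_le (le_max_right _ _)⟩
  have hA0 : 0 < A := (div_pos S.logDerivBound_pos hα).trans hA
  have hgap : S.logDerivBound + A * S.contractionRatio < A := by
    rw [div_lt_iff₀ hα] at hA
    linarith
  have hlim : Tendsto (fun n : ℕ ↦ (n : ℝ) ^ (1 - S.h n) * (1 + (1 - S.h n) * Real.exp A) *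
      (S.coneGap A + (1 - S.coneGap A) * q)) atTop (𝓝 (S.coneGap A + (1 - S.coneGap A) * q)) := by
    simpa using (S.tendsto_natCast_rpow_one_sub_h.mul
      (((S.tendsto_h.const_sub 1).mul_const (Real.exp A)).const_add 1)).mul_const
        (S.coneGap A + (1 - S.coneGap A) * q)
  have hlt : S.coneGap A + (1 - S.coneGap A) * q < q := by
    nlinarith [coneGap_pos hA0 hgap]
  filter_upwards [hlim.eventually_le_const hlt, S.eventually_h_mem_Ioc, eventually_gt_atTop 0]
    with n hR hn hn0 m hm φ hφ
  exact hm.integral_le_mul_integral hn0 hA0 hgap hn.1.le hn.2 (zero_lt_one.trans hq) hR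
    (hφ.mono haA)

end IntegralComparison

section Density

variable {n : ℕ} {h q : ℝ} {m : Measure ℝ}

variable (S) in
/-- For large `n`, the density bound `DensityLE` holds uniformly over the class of measures
`IsSubconformal n (h n)`. -/
def EventuallyDensityLE (q : ℝ) (Q : ℝ → ℝ → Prop) : Prop :=
  ∀ᶠ n in atTop, ∀ m, S.IsSubconformal n (S.h n) m → DensityLE m (S.h n) q Q

theorem IsSubconformal.measureReal_Icc_le_integral_exp_neg_mul_infDist
    (hm : S.IsSubconformal n h m) {a s t : ℝ} (hs : 0 ≤ s) (ht : t ≤ 1) :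
    m.real (Icc s t) ≤ ∫ x in 0..1, Real.exp (-(a * Metric.infDist x (Icc s t))) ∂m := by
  have := hm.isProbabilityMeasure
  have := hm.nullSingletonClass
  have hcont : Continuous fun x ↦ Real.exp (-(a * Metric.infDist x (Icc s t))) := by fun_prop
  rw [intervalIntegral.integral_of_le zero_le_one, ← integral_Icc_eq_integral_Ioc]
  calc m.real (Icc s t) = ∫ x in Icc s t, Real.exp (-(a * Metric.infDist x (Icc s t))) ∂m := by
        rw [setIntegral_congr_fun (g := fun _ ↦ (1 : ℝ)) measurableSet_Icc fun x hx ↦ by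
          simp [Metric.infDist_zero_of_mem hx]]
        simp
    _ ≤ _ := setIntegral_mono_set (hcont.continuousOn.integrableOn_compact isCompact_Icc)
        (.of_forall fun _ ↦ Real.exp_nonneg _) (Icc_subset_Icc hs ht).eventuallyLE

variable (S) in
theorem eventuallyDensityLE_of_le_sub (hq : 1 < q) {δ : ℝ} (hδ : 0 < δ) :
    S.EventuallyDensityLE q fun s t ↦ δ ≤ t - s := by
  obtain ⟨r, hr, hrq⟩ := exists_one_lt_pow_le hq 2
  have := sub_pos.2 hr
  set a := 2 / (δ * (r - 1))
  have ha : 0 < a := by positivity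
  filter_upwards [S.eventually_integral_le_mul_integral a hr, S.eventually_h_mem_Ioc]
    with n hinteg hn m hm s t hs hst ht hδst
  have hlen0 : 0 < t - s := sub_pos.2 hst
  have htail : 2 / a ≤ (r - 1) * (t - s) := by
    rw [div_div_cancel₀ two_ne_zero, mul_comm]
    gcongr
  calc m.real (Icc s t)
      ≤ ∫ x in 0..1, Real.exp (-(a * Metric.infDist x (Icc s t))) ∂m :=
        hm.measureReal_Icc_le_integral_exp_neg_mul_infDist hs ht
    _ ≤ r * ∫ x in 0..1, Real.exp (-(a * Metric.infDist x (Icc s t))) :=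
        hinteg m hm _ (.exp_neg_mul (Metric.lipschitz_infDist_pt _) ha.le)
    _ ≤ r * (t - s + 2 / a) := by
        gcongr
        exact integral_exp_neg_mul_infDist_Icc_le ha hs hst.le ht
    _ ≤ r ^ 2 * (t - s) := by nlinarith
    _ ≤ q * (t - s) ^ S.h n := by
        gcongr
        exact Real.self_le_rpow_of_le_one hlen0.le (by linarith) hn.2

/-- The breakpoints are the `b i` clamped to `[s, t]`. -/
theorem IsSubconformal.measureReal_Icc_le_of_cylinder_pieces (hm : S.IsSubconformal n h m)
    (hn : 0 < n) (h0 : 0 ≤ h) (h1 : h ≤ 1) {B s t : ℝ} (hB : 0 ≤ B) (hst : s ≤ t) (ht : t ≤ 1)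
    (hpiece : ∀ i, max s (S.b (i + 1)) < min t (S.b i) →
      m.real (Icc (max s (S.b (i + 1))) (min t (S.b i))) ≤
        B * (min t (S.b i) - max s (S.b (i + 1))) ^ h) :
    m.real (Icc s t) ≤ B * (n : ℝ) ^ (1 - h) * (t - s) ^ h := by
  have := hm.isProbabilityMeasure
  have := hm.nullSingletonClass
  let p (i : ℕ) : ℝ := max s (min t (S.b i))
  have hp (i : ℕ) : p (i + 1) ≤ p i :=
    max_le_max_left s (min_le_min_left t (S.b_anti i.lt_succ_self).le)
  have hp0 : p 0 = t := by simp [p, S.b_zero, ht, hst]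
  have hcover : Icc s t ⊆ Icc (p n) t ∪ Iic (S.b n) := by
    intro x hx
    rcases le_or_gt (p n) x with hle | hlt
    · exact .inl ⟨hle, hx.2⟩
    · have := (lt_max_iff.1 hlt).resolve_left hx.1.not_gt
      exact .inr (this.le.trans (min_le_right _ _))
  have hpieces : m.real (Icc (p n) (p 0)) ≤ B * (n : ℝ) ^ (1 - h) * (p 0 - p n) ^ h := by
    refine measureReal_Icc_le_of_pieces hn h0 h1 hB (fun i _ ↦ hp i) fun i _ ↦ ?_
    rcases (hp i).eq_or_lt with heq | hlt
    · rw [heq, Icc_self, measureReal_def, measure_singleton, ENNReal.toReal_zero]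
      exact mul_nonneg hB (Real.rpow_nonneg (sub_self _).ge _)
    · have hleft : p (i + 1) = max s (S.b (i + 1)) := by grind
      have hright : p i = min t (S.b i) := by grind
      rw [hleft, hright] at hlt ⊢
      exact hpiece i hlt
  calc m.real (Icc s t) ≤ m.real (Icc (p n) t) + m.real (Iic (S.b n)) :=
        (measureReal_mono hcover).trans (measureReal_union_le _ _)
    _ = m.real (Icc (p n) (p 0)) := by
        rw [hm.measureReal_eq_zero_of_subset_Iic subset_rfl, add_zero, hp0]
    _ ≤ B * (n : ℝ) ^ (1 - h) * (p 0 - p n) ^ h := hpieces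
    _ ≤ B * (n : ℝ) ^ (1 - h) * (t - s) ^ h := by
        have hpn : p n ≤ p 0 := hp0 ▸ max_le hst (min_le_left _ _)
        have hspn : s ≤ p n := le_max_left _ _
        gcongr
        exact hp0.le

end Density

section BoundaryAndCrossing

variable {n k : ℕ} {h q r B s t δ : ℝ} {m : Measure ℝ}

theorem IsSubconformal.measureReal_cylinder_le (hm : S.IsSubconformal n h m) (h1 : h ≤ 1)
    (hr : ∀ x ∈ Icc (0 : ℝ) 1, ∀ y ∈ Icc (0 : ℝ) 1, |S.g' (k + 1) y| ≤ r * |S.g' (k + 1) x|) :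
    m.real (Icc (S.b (k + 1)) (S.b k)) ≤ r * (S.b k - S.b (k + 1)) ^ h := by
  have himage := hm.measureReal_image_le_mul_rpow h1 le_rfl zero_le_one le_rfl hr zero_le_one
    (by simp [hm.measureReal_Icc_zero_one])
  rwa [S.g_apply_one, S.g_apply_zero, mul_one] at himage

theorem IsSubconformal.measureReal_Icc_zero_b_le (hm : S.IsSubconformal n h m) (hn : 0 < n)
    (h0 : 0 ≤ h) (h1 : h ≤ 1) (hr0 : 0 ≤ r)
    (hr : ∀ j ≥ k, ∀ x ∈ Icc (0 : ℝ) 1, ∀ y ∈ Icc (0 : ℝ) 1,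
      |S.g' (j + 1) y| ≤ r * |S.g' (j + 1) x|) :
    m.real (Icc 0 (S.b k)) ≤ r * (n : ℝ) ^ (1 - h) * S.b k ^ h := by
  have hpieces := hm.measureReal_Icc_le_of_cylinder_pieces hn h0 h1 hr0 (S.b_pos k).le
    (S.b_le_one k) fun j hj ↦ by
      have hkj : k ≤ j := Nat.lt_succ_iff.1 (S.b_anti.lt_iff_gt.1
        ((le_max_right _ _).trans_lt (hj.trans_le (min_le_left _ _))))
      rw [max_eq_right (S.b_pos _).le, min_eq_right (S.b_anti.antitone hkj)]
      exact hm.measureReal_cylinder_le h1 (hr j hkj)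
  rwa [sub_zero] at hpieces

variable (S) in
theorem eventuallyDensityLE_of_left_eq_zero (hq : 1 < q) :
    S.EventuallyDensityLE q fun s _ ↦ s = 0 := by
  obtain ⟨r, hr, hrq⟩ := exists_one_lt_pow_le hq 3
  have hr0 : 0 < r := zero_lt_one.trans hr
  obtain ⟨K, hK⟩ := eventually_atTop.1
    ((S.eventually_abs_g'_le_mul hr).and (S.eventually_b_le_mul_b_succ hr))
  filter_upwards [S.eventuallyDensityLE_of_le_sub hq (S.b_pos K), S.eventually_h_mem_Ioc,
    S.tendsto_natCast_rpow_one_sub_h.eventually_le_const hr, eventually_gt_atTop 0]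
    with n hlong hh hnr hn m hm s t hs hst ht hs0
  subst hs0
  rcases le_or_gt (S.b K) t with hKt | htK
  · exact hlong m hm 0 t hs hst ht (by simpa using hKt)
  obtain ⟨i, hit, hti⟩ := S.exists_mem_cylinder hst (htK.trans_le (S.b_le_one K))
  have hKi : K ≤ i := Nat.lt_succ_iff.1 (S.b_anti.lt_iff_gt.1 (hit.trans_lt htK))
  calc m.real (Icc 0 t) ≤ m.real (Icc 0 (S.b i)) :=
        have := hm.isProbabilityMeasure
        measureReal_mono (Icc_subset_Icc_right hti.le)
    _ ≤ r * (n : ℝ) ^ (1 - S.h n) * S.b i ^ S.h n :=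
        hm.measureReal_Icc_zero_b_le hn hh.1.le hh.2 hr0.le fun j hj ↦ (hK j (hKi.trans hj)).1
    _ ≤ r * r * (r * t) ^ S.h n := by
        have hbi : S.b i ≤ r * t := (hK i hKi).2.trans (by gcongr)
        have := (S.b_pos i).le
        gcongr
        exact hh.1.le
    _ = r * r * r ^ S.h n * t ^ S.h n := by
        rw [Real.mul_rpow hr0.le hst.le, ← mul_assoc]
    _ ≤ r * r * r * t ^ S.h n := by
        gcongr
        exact Real.rpow_le_self_of_one_le hr.le hh.2
    _ ≤ q * (t - 0) ^ S.h n := by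
        rw [sub_zero]
        gcongr
        linarith

theorem IsSubconformal.measureReal_Icc_le_of_preimage (hm : S.IsSubconformal n h m) (h1 : h ≤ 1)
    (hr : ∀ u v, 0 ≤ u → u ≤ v → v ≤ 1 → S.g (k + 1) u - S.g (k + 1) v < δ →
      ∀ x ∈ Icc u v, ∀ y ∈ Icc u v, |S.g' (k + 1) y| ≤ r * |S.g' (k + 1) x|)
    (hB : 0 ≤ B) {Q : ℝ → ℝ → Prop} (hdens : DensityLE m h B Q)
    (hs : S.b (k + 1) ≤ s) (hst : s < t) (ht : t ≤ S.b k) (hδ : t - s < δ)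
    (hQ : ∀ u ∈ Icc (0 : ℝ) 1, ∀ v ∈ Icc (0 : ℝ) 1, S.g (k + 1) u = t → S.g (k + 1) v = s → Q u v) :
    m.real (Icc s t) ≤ r * B * (t - s) ^ h := by
  obtain ⟨u, v, hu, huv, hv, rfl, rfl⟩ := exists_preimage_Icc hs hst ht
  exact hm.measureReal_image_le_mul_rpow h1 hu huv.le hv (hr u v hu huv.le hv hδ) hB
    (hdens u v hu huv hv
      (hQ u ⟨hu, huv.le.trans hv⟩ v ⟨hu.trans huv.le, hv⟩ rfl rfl))

theorem eq_zero_of_g_eq_b {x : ℝ} (hx : x ∈ Icc (0 : ℝ) 1) (h : S.g (k + 1) x = S.b k) : x = 0 :=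
  (S.g_anti (k + 1) k.succ_pos).injOn hx (left_mem_Icc.2 zero_le_one)
    (h.trans (S.g_apply_zero k).symm)

theorem eq_one_of_g_eq_b_succ {x : ℝ} (hx : x ∈ Icc (0 : ℝ) 1)
    (h : S.g (k + 1) x = S.b (k + 1)) : x = 1 :=
  (S.g_anti (k + 1) k.succ_pos).injOn hx (right_mem_Icc.2 zero_le_one)
    (h.trans (S.g_apply_one k).symm)

variable (S) in
theorem eventuallyDensityLE_of_right_eq_one (hq : 1 < q) :
    S.EventuallyDensityLE q fun _ t ↦ t = 1 := by
  obtain ⟨r, hr, hrq⟩ := exists_one_lt_pow_le hq 2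
  have hr0 : 0 < r := zero_lt_one.trans hr
  obtain ⟨δ, hδ, hdist⟩ := S.exists_abs_g'_le_mul_of_g_sub_lt hr
  have hb : 0 < 1 - S.b 1 := sub_pos.2 (S.b_zero ▸ S.b_anti one_pos)
  filter_upwards [S.eventuallyDensityLE_of_le_sub hq (lt_min hδ hb),
    S.eventuallyDensityLE_of_left_eq_zero hr, S.eventually_h_mem_Ioc]
    with n hlong hzero hh m hm s t hs hst ht ht1
  rcases le_or_gt (min δ (1 - S.b 1)) (t - s) with hle | hlt
  · exact hlong m hm s t hs hst ht hle
  obtain ⟨hltδ, hltb⟩ := lt_min_iff.1 hlt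
  subst ht1
  calc m.real (Icc s 1) ≤ r * r * (1 - s) ^ S.h n :=
        hm.measureReal_Icc_le_of_preimage (k := 0) hh.2 (hdist 0) hr0.le (hzero m hm)
          ((sub_lt_sub_iff_left 1).1 hltb).le hst S.b_zero.ge hltδ fun u hu v _ hut _ ↦
            eq_zero_of_g_eq_b hu (hut.trans S.b_zero.symm)
    _ ≤ q * (1 - s) ^ S.h n := by
        have := sub_pos.2 hst
        gcongr
        linarith

variable (S) in
theorem eventuallyDensityLE_of_boundary (hq : 1 < q) :
    S.EventuallyDensityLE q fun s t ↦ s = 0 ∨ t = 1 := by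
  filter_upwards [S.eventuallyDensityLE_of_left_eq_zero hq,
    S.eventuallyDensityLE_of_right_eq_one hq] with n hzero hone m hm s t hs hst ht hQ
  exact hQ.elim (hzero m hm s t hs hst ht) (hone m hm s t hs hst ht)

variable (S) in
/-- The trace of `[s, t]` on a cylinder is the image of an interval that contains `0` or `1`. -/
theorem eventuallyDensityLE_of_crossing (hq : 1 < q) :
    S.EventuallyDensityLE q fun s t ↦ ∀ k, ¬(S.b (k + 1) ≤ s ∧ t ≤ S.b k) := by
  obtain ⟨r, hr, hrq⟩ := exists_one_lt_pow_le hq 3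
  have hr0 : 0 < r := zero_lt_one.trans hr
  obtain ⟨δ, hδ, hdist⟩ := S.exists_abs_g'_le_mul_of_g_sub_lt hr
  filter_upwards [S.eventuallyDensityLE_of_le_sub hq hδ, S.eventuallyDensityLE_of_boundary hr,
    S.eventually_h_mem_Ioc, S.tendsto_natCast_rpow_one_sub_h.eventually_le_const hr,
    eventually_gt_atTop 0] with n hlong hbdry hh hnr hn m hm s t hs hst ht hcross
  rcases le_or_gt δ (t - s) with hle | hlt
  · exact hlong m hm s t hs hst ht hle
  have hpiece (i : ℕ) (hi : max s (S.b (i + 1)) < min t (S.b i)) :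
      m.real (Icc (max s (S.b (i + 1))) (min t (S.b i))) ≤
        r * r * (min t (S.b i) - max s (S.b (i + 1))) ^ S.h n := by
    have hshort : min t (S.b i) - max s (S.b (i + 1)) < δ :=
      (sub_le_sub (min_le_left _ _) (le_max_left _ _)).trans_lt hlt
    refine hm.measureReal_Icc_le_of_preimage hh.2 (hdist i) hr0.le (hbdry m hm) (le_max_right _ _)
      hi (min_le_right _ _) hshort fun u hu v hv hgu hgv ↦ ?_
    rcases le_or_gt (S.b (i + 1)) s with hbs | hsb
    · have hbt : S.b i ≤ t := (not_le.1 fun htb ↦ hcross i ⟨hbs, htb⟩).le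
      exact .inl (eq_zero_of_g_eq_b hu (hgu.trans (min_eq_right hbt)))
    · exact .inr (eq_one_of_g_eq_b_succ hv (hgv.trans (max_eq_right hsb.le)))
  calc m.real (Icc s t) ≤ r * r * (n : ℝ) ^ (1 - S.h n) * (t - s) ^ S.h n :=
        hm.measureReal_Icc_le_of_cylinder_pieces hn hh.1.le hh.2 (by positivity) hst.le ht hpiece
    _ ≤ r * r * r * (t - s) ^ S.h n := by
        have := sub_pos.2 hst
        gcongr
    _ ≤ q * (t - s) ^ S.h n := by
        have := sub_pos.2 hst
        gcongr
        linarith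

end BoundaryAndCrossing

section AllIntervals

variable {n k : ℕ} {h q B ℓ s t u v : ℝ} {m : Measure ℝ}

variable (S) in
/-- The constant `D = c / (1 - α)`: along the iterated images of an interval of length `ℓ` the
distortions multiply to at most `exp (D * ℓ)`, by summing a geometric series. -/
def totalDistortionBound : ℝ := S.logDerivBound / (1 - S.contractionRatio)

variable (S) in
theorem totalDistortionBound_nonneg : 0 ≤ S.totalDistortionBound :=
  div_nonneg S.logDerivBound_pos.le (sub_nonneg.2 S.contractionRatio_lt_one.le)

variable (S) in
/-- An interval of length at most `ℓ` with density at most `B * exp (D * (ℓ - (v - u)))`. This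
correction to `B` grows under each branch, as images get shorter, by at least the distortion of
the branch. -/
structure IsPiece (m : Measure ℝ) (h B ℓ u v : ℝ) : Prop where
  nonneg : 0 ≤ u
  le : u ≤ v
  le_one : v ≤ 1
  sub_le : v - u ≤ ℓ
  measureReal_le : m.real (Icc u v) ≤
    B * Real.exp (S.totalDistortionBound * (ℓ - (v - u))) * (v - u) ^ h

theorem isPiece_of_measureReal_le (hB : 0 ≤ B) (hu : 0 ≤ u) (huv : u ≤ v) (hv : v ≤ 1)
    (hℓ : v - u ≤ ℓ) (hm : m.real (Icc u v) ≤ B * (v - u) ^ h) : S.IsPiece m h B ℓ u v where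
  nonneg := hu
  le := huv
  le_one := hv
  sub_le := hℓ
  measureReal_le := hm.trans <| by
    have := sub_nonneg.2 huv
    gcongr
    exact le_mul_of_one_le_right hB (Real.one_le_exp
      (mul_nonneg S.totalDistortionBound_nonneg (sub_nonneg.2 hℓ)))

namespace IsPiece

theorem measureReal_le_exp_mul (hp : S.IsPiece m h B ℓ u v) (hB : 0 ≤ B) :
    m.real (Icc u v) ≤ B * Real.exp (S.totalDistortionBound * ℓ) * (v - u) ^ h := by
  refine hp.measureReal_le.trans ?_
  have huv := sub_nonneg.2 hp.le
  have := S.totalDistortionBound_nonneg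
  gcongr
  exact sub_le_self _ huv

theorem image (hp : S.IsPiece m h B ℓ u v) (hm : S.IsSubconformal n h m) (h1 : h ≤ 1) (hB : 0 ≤ B)
    (k : ℕ) : S.IsPiece m h B ℓ (S.g (k + 1) v) (S.g (k + 1) u) := by
  obtain ⟨hu, huv, hv, hℓ, hmeas⟩ := hp
  have hu' : u ∈ Icc (0 : ℝ) 1 := ⟨hu, huv.trans hv⟩
  have hv' : v ∈ Icc (0 : ℝ) 1 := ⟨hu.trans huv, hv⟩
  have huv0 := sub_nonneg.2 huv
  have hα := S.contractionRatio_lt_one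
  have hshrink : S.g (k + 1) u - S.g (k + 1) v ≤ S.contractionRatio * (v - u) :=
    g_sub_le hu huv hv
  have hdist : ∀ x ∈ Icc u v, ∀ y ∈ Icc u v,
      |S.g' (k + 1) y| ≤ Real.exp (S.logDerivBound * (v - u)) * |S.g' (k + 1) x| :=
    fun x hx y hy ↦ (S.logLipschitzOn_abs_g' k).le_exp_mul_of_dist_le S.logDerivBound_pos.le
      (Icc_subset_Icc hu hv hy) (Icc_subset_Icc hu hv hx) (Real.dist_le_of_mem_Icc hy hx)
  have hexponent : S.logDerivBound * (v - u) + S.totalDistortionBound * (ℓ - (v - u)) ≤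
      S.totalDistortionBound * (ℓ - (S.g (k + 1) u - S.g (k + 1) v)) := by
    have hD : S.totalDistortionBound * (1 - S.contractionRatio) = S.logDerivBound :=
      div_mul_cancel₀ _ (sub_pos.2 hα).ne'
    rw [← hD]
    nlinarith [S.totalDistortionBound_nonneg]
  refine ⟨(S.g_mapsTo k hv').1, S.g_antitoneOn k hu' hv' huv, (S.g_mapsTo k hu').2,
    (hshrink.trans (mul_le_of_le_one_left huv0 hα.le)).trans hℓ, ?_⟩
  calc m.real (Icc (S.g (k + 1) v) (S.g (k + 1) u))
      ≤ Real.exp (S.logDerivBound * (v - u)) *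
          (B * Real.exp (S.totalDistortionBound * (ℓ - (v - u)))) *
          (S.g (k + 1) u - S.g (k + 1) v) ^ h :=
        hm.measureReal_image_le_mul_rpow h1 hu huv hv hdist (by positivity) hmeas
    _ = B * Real.exp (S.logDerivBound * (v - u) + S.totalDistortionBound * (ℓ - (v - u))) *
          (S.g (k + 1) u - S.g (k + 1) v) ^ h := by
        rw [Real.exp_add]
        ring
    _ ≤ _ := by
        have := sub_nonneg.2 (S.g_antitoneOn k hu' hv' huv)
        gcongr

end IsPiece

/-- Pull `[s, t]` back along branches until it is either long, and can be subdivided equally, or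
not contained in a cylinder. The induction works because each pullback expands by at least
`α⁻¹`. -/
theorem IsSubconformal.hasSubdivision_isPiece (hm : S.IsSubconformal n h m) (h1 : h ≤ 1)
    (hB : 0 ≤ B) {N₀ : ℕ} (hN₀ : 0 < N₀) (hℓ : 1 ≤ ℓ * N₀)
    (hlong : DensityLE m h B fun s t ↦ ℓ / N₀ ≤ t - s)
    (hcross : DensityLE m h B fun s t ↦ ∀ k, ¬(S.b (k + 1) ≤ s ∧ t ≤ S.b k))
    (hs : 0 ≤ s) (hst : s < t) (ht : t ≤ 1) :
    HasSubdivision (S.IsPiece m h B ℓ) N₀ s t := by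
  obtain ⟨j, hj⟩ := exists_pow_lt_of_lt_one (sub_pos.2 hst) S.contractionRatio_lt_one
  induction j generalizing s t with
  | zero => linarith
  | succ j ih =>
    have hN₀' : (0 : ℝ) < N₀ := Nat.cast_pos.2 hN₀
    rcases le_or_gt ℓ (t - s) with hle | hlt
    · refine .equal hN₀ (fun u v hu hv huv ↦ ?_) hst.le
      have huv0 : u < v := sub_pos.1 (huv ▸ div_pos (sub_pos.2 hst) hN₀')
      refine isPiece_of_measureReal_le hB (hs.trans hu) huv0.le (hv.trans ht) ?_
        (hlong u v (hs.trans hu) huv0 (hv.trans ht) ?_)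
      · rw [huv, div_le_iff₀ hN₀']
        linarith
      · beta_reduce
        rw [huv]
        gcongr
    by_cases hcyl : ∃ k, S.b (k + 1) ≤ s ∧ t ≤ S.b k
    · obtain ⟨k, hks, hkt⟩ := hcyl
      obtain ⟨u, v, hu, huv, hv, rfl, rfl⟩ := exists_preimage_Icc hks hst hkt
      refine (ih hu huv hv ?_).image fun u v hp ↦ hp.image hm h1 hB k
      rw [pow_succ'] at hj
      exact lt_of_mul_lt_mul_left (hj.trans_le (g_sub_le hu huv.le hv)) S.contractionRatio_pos.le
    · exact .single hN₀ (isPiece_of_measureReal_le hB hs hst.le ht hlt.le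
        (hcross s t hs hst ht (not_exists.1 hcyl)))

variable (S) in
theorem eventuallyDensityLE_true (hq : 1 < q) : S.EventuallyDensityLE q fun _ _ ↦ True := by
  obtain ⟨r, hr, hrq⟩ := exists_one_lt_pow_le hq 3
  have hr0 : 0 < r := zero_lt_one.trans hr
  obtain ⟨ℓ, hℓexp, hℓ⟩ : ∃ ℓ, Real.exp (S.totalDistortionBound * ℓ) ≤ r ∧ 0 < ℓ := by
    have hexp : Continuous fun ℓ ↦ Real.exp (S.totalDistortionBound * ℓ) := by fun_prop
    have hlim := (hexp.tendsto' 0 1 (by simp)).mono_left (nhdsWithin_le_nhds (s := Ioi 0))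
    exact ((hlim.eventually_le_const hr).and self_mem_nhdsWithin).exists
  obtain ⟨N₀, hN₀⟩ := exists_nat_ge ℓ⁻¹
  have hN₀0 : 0 < N₀ := Nat.cast_pos.1 ((inv_pos.2 hℓ).trans_le hN₀)
  have hN₀r : ∀ᶠ n in atTop, (N₀ : ℝ) ^ (1 - S.h n) ≤ r := by
    have hlim := Tendsto.rpow (tendsto_const_nhds (x := (N₀ : ℝ))) (S.tendsto_h.const_sub 1)
      (.inl (by positivity))
    rw [sub_self, Real.rpow_zero] at hlim
    exact hlim.eventually_le_const hr
  filter_upwards [S.eventuallyDensityLE_of_le_sub hr (div_pos hℓ (Nat.cast_pos.2 hN₀0)),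
    S.eventuallyDensityLE_of_crossing hr, S.eventually_h_mem_Ioc, hN₀r]
    with n hlong hcross hh hnr m hm s t hs hst ht _
  have := hm.isProbabilityMeasure
  have hsub := hm.hasSubdivision_isPiece hh.2 hr0.le hN₀0 ((inv_le_iff_one_le_mul₀' hℓ).1 hN₀)
    (hlong m hm) (hcross m hm) hs hst ht
  have := sub_pos.2 hst
  calc m.real (Icc s t)
      ≤ r * Real.exp (S.totalDistortionBound * ℓ) * (N₀ : ℝ) ^ (1 - S.h n) * (t - s) ^ S.h n :=
        hsub.measureReal_Icc_le hh.1.le hh.2 (by positivity)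
          (fun u v hp ↦ ⟨hp.le, hp.measureReal_le_exp_mul hr0.le⟩) hst.le
    _ ≤ r * r * r * (t - s) ^ S.h n := by gcongr
    _ ≤ q * (t - s) ^ S.h n := by
        gcongr
        linarith

end AllIntervals

theorem normMeas_div_le_of_forall_densityLE {n : ℕ} {q s t : ℝ} (h0 : 0 < S.h n) (hq : 0 ≤ q)
    (hdens : ∀ m, S.IsSubconformal n (S.h n) m → DensityLE m (S.h n) q fun _ _ ↦ True)
    (hs : 0 ≤ s) (hst : s < t) (ht : t ≤ 1) :
    normMeas S n (Icc s t) / ENNReal.ofReal ((t - s) ^ S.h n) ≤ ENNReal.ofReal q := by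
  -- If `H_{h_n}(J_n)` is `0` or `∞`, then `normMeas` is zero.
  by_cases hJ0 : μH[S.h n] (limitSet S.g n) = 0
  · simp [normMeas, measure_mono_null inter_subset_right hJ0]
  by_cases hJtop : μH[S.h n] (limitSet S.g n) = ⊤
  · simp [normMeas, hJtop]
  have hm := isSubconformal_cond_hausdorffMeasure h0 hJ0 hJtop
  have := hm.isProbabilityMeasure
  rw [normMeas_eq_cond measurableSet_Icc, ← ofReal_measureReal]
  refine ENNReal.div_le_of_le_mul ?_
  rw [← ENNReal.ofReal_mul hq]
  exact ENNReal.ofReal_le_ofReal (hdens _ hm s t hs hst ht trivial)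

end NonlinearIFS

/-- In the nonlinear setting, for every `ε > 0` there is `n₀` such that every closed interval
    `Δ ⊆ [0,1]` of positive length has density `m_n(Δ)/|Δ|^{h_n} ≤ 1 + ε` for all `n > n₀`. -/
theorem nonlinear_density_all_intervals (S : NonlinearIFS) :
    ∀ ε > (0 : ℝ), ∃ n₀ : ℕ, ∀ n > n₀, ∀ s t : ℝ,
      0 ≤ s → s < t → t ≤ 1 →
      normMeas S n (Set.Icc s t) / ENNReal.ofReal ((t - s) ^ S.h n) ≤
        ENNReal.ofReal (1 + ε) := by
  intro ε hε
  obtain ⟨n₀, hn₀⟩ := eventually_atTop.1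
    ((S.eventuallyDensityLE_true (lt_add_of_pos_right 1 hε)).and S.eventually_h_mem_Ioc)
  refine ⟨n₀, fun n hn s t hs hst ht ↦ ?_⟩
  obtain ⟨hdens, hh⟩ := hn₀ n hn.le
  exact NonlinearIFS.normMeas_div_le_of_forall_densityLE hh.1 (by positivity) hdens hs hst ht
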